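/- Let X be a nonempty compact subset of ℝ^m with the ℓ¹ norm, I and J finite nonempty sets, q : X × I × J → X a deterministic commutative transition such that q(·, i, j) is 1-Lipschitz for ‖·‖₁ for every (i,j) ∈ I × J, and g : X × I × J → [0,1] such that g(·, i, j) is continuous for every (i,j). Then for every initial state x₁ ∈ X the stochastic game Γ(x₁) has a uniform value. -/

import Mathlib

open Filter Topology

noncomputable section

/-- Expected total payoff over `n` stages in a deterministic two-player stochastic game, when
player 1 uses the behavioral strategy `σ`, player 2 uses `τ`, the current state is `x` and the
past history (sequence of action pairs) is `h`. At each stage the two actions are drawn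
independently according to `σ h` and `τ h`. -/
def expPay {X I J : Type*} [Fintype I] [Fintype J]
    (q : X → I → J → X) (g : X → I → J → ℝ)
    (σ : List (I × J) → PMF I) (τ : List (I × J) → PMF J) :
    ℕ → X → List (I × J) → ℝ
  | 0, _, _ => 0
  | n + 1, x, h => ∑ i : I, ∑ j : J, ((σ h) i).toReal * ((τ h) j).toReal *
      (g x i j + expPay q g σ τ n (q x i j) (h ++ [(i, j)]))

/-- The `n`-stage average expected payoff `γ_n(x₁, σ, τ)`. -/
def gamePayoff {X I J : Type*} [Fintype I] [Fintype J]
    (q : X → I → J → X) (g : X → I → J → ℝ)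
    (σ : List (I × J) → PMF I) (τ : List (I × J) → PMF J) (x₁ : X) (n : ℕ) : ℝ :=
  (1 / (n : ℝ)) * expPay q g σ τ n x₁ []

/-- Player 1 guarantees `w` in the game `Γ(x₁)`. -/
def Guarantees1 {X I J : Type*} [Fintype I] [Fintype J]
    (q : X → I → J → X) (g : X → I → J → ℝ) (x₁ : X) (w : ℝ) : Prop :=
  ∀ ε > (0 : ℝ), ∃ (σ : List (I × J) → PMF I) (N : ℕ),
    ∀ (τ : List (I × J) → PMF J), ∀ n ≥ N, w - ε ≤ gamePayoff q g σ τ x₁ n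

/-- Player 2 guarantees `w` in the game `Γ(x₁)`. -/
def Guarantees2 {X I J : Type*} [Fintype I] [Fintype J]
    (q : X → I → J → X) (g : X → I → J → ℝ) (x₁ : X) (w : ℝ) : Prop :=
  ∀ ε > (0 : ℝ), ∃ (τ : List (I × J) → PMF J) (N : ℕ),
    ∀ (σ : List (I × J) → PMF I), ∀ n ≥ N, gamePayoff q g σ τ x₁ n ≤ w + ε

/-!
A nonexpansive self-map of a compact space whose distance is the maximum of finitely many
functions `φ y - φ x` (such as a compact subset of `ℝ^m` with the `ℓ¹` norm) has asymptotically
periodic orbits: on a minimal subset of an ω-limit set the powers of the map form a transitive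
family of commuting isometries, and a polyhedral distance leaves room for finitely many of them.

In a commutative game the state depends only on how many times each action pair was played. By
asymptotic periodicity these numbers matter, up to a small error, only through finitely many
values of a counter, so the game is uniformly close to one with finitely many states.

A finite game has a uniform value by the Mertens–Neyman argument. Its discounted values
`v_l` are, state by state, bounded and continuous in the discount factor `l`, and
`(l, v_l x)` lies on an algebraic curve, because a value that is realised by extreme optimal
strategies makes a determinant vanish. Hence `l ↦ v_l` has bounded variation near `0`, and there is
a sequence of discount factors tending to `0` along which the value changes slowly compared with
the factor itself. Each player secures nearly the limit of the discounted values by playing a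
discounted-optimal action for a factor that decreases when past payoffs were good and increases when
they were bad.
-/

/-! ### Matrix games -/

section MatrixGames

open Matrix

variable {I J : Type*} [Fintype I] [Fintype J] {M M' : Matrix I J ℝ} {v v' δ : ℝ}

lemma dotProduct_le_of_mem_stdSimplex {p f : I → ℝ} {c : ℝ} (hp : p ∈ stdSimplex ℝ I)
    (h : ∀ i, f i ≤ c) : p ⬝ᵥ f ≤ c :=
  calc p ⬝ᵥ f ≤ ∑ i, p i * c :=
        Finset.sum_le_sum fun i _ => mul_le_mul_of_nonneg_left (h i) (hp.1 i)
    _ = c := by rw [← Finset.sum_mul, hp.2, one_mul]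

lemma le_dotProduct_of_mem_stdSimplex {p f : I → ℝ} {c : ℝ} (hp : p ∈ stdSimplex ℝ I)
    (h : ∀ i, c ≤ f i) : c ≤ p ⬝ᵥ f := by
  have := dotProduct_le_of_mem_stdSimplex (f := -f) hp fun i => neg_le_neg (h i)
  rwa [dotProduct_neg, neg_le_neg_iff] at this

lemma dotProduct_const_sub_of_mem_stdSimplex {p : I → ℝ} (hp : p ∈ stdSimplex ℝ I) (f : I → ℝ)
    (c : ℝ) : p ⬝ᵥ (fun i => c - f i) = c - p ⬝ᵥ f := by
  simp only [dotProduct, mul_sub, Finset.sum_sub_distrib, ← Finset.sum_mul, hp.2, one_mul]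

lemma nonempty_of_mem_stdSimplex {p : I → ℝ} (hp : p ∈ stdSimplex ℝ I) : Nonempty I := by
  by_contra hI
  rw [not_nonempty_iff] at hI
  simpa using hp.2

/-- `v` is the value in mixed strategies of the zero-sum matrix game `M`, whose row player
maximizes: each player has an optimal mixed action. -/
def IsMatrixGameValue (M : Matrix I J ℝ) (v : ℝ) : Prop :=
  (∃ p ∈ stdSimplex ℝ I, ∀ j, v ≤ (p ᵥ* M) j) ∧ ∃ r ∈ stdSimplex ℝ J, ∀ i, (M *ᵥ r) i ≤ v

theorem exists_isMatrixGameValue [Nonempty I] [Nonempty J] (M : Matrix I J ℝ) :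
    ∃ v, IsMatrixGameValue M v := by
  classical
  obtain ⟨r, hr, p, hp, hsaddle⟩ := Sion.exists_isSaddlePointOn (X := stdSimplex ℝ J)
    (Y := stdSimplex ℝ I) (f := fun y x => x ⬝ᵥ M *ᵥ y)
    ⟨_, single_mem_stdSimplex ℝ (Classical.arbitrary J)⟩ (convex_stdSimplex ℝ J)
    (isCompact_stdSimplex ℝ J)
    (fun x _ => (by fun_prop : Continuous _).lowerSemicontinuous.lowerSemicontinuousOn _)
    (fun x _ => (((dotProductBilin ℝ ℝ x) ∘ₗ M.mulVecLin).convexOn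
      (convex_stdSimplex ℝ J)).quasiconvexOn)
    (convex_stdSimplex ℝ I) ⟨_, single_mem_stdSimplex ℝ (Classical.arbitrary I)⟩
    (isCompact_stdSimplex ℝ I)
    (fun y _ => (by fun_prop : Continuous _).upperSemicontinuous.upperSemicontinuousOn _)
    (fun y _ => (((dotProductBilin ℝ ℝ).flip (M *ᵥ y)).concaveOn
      (convex_stdSimplex ℝ I)).quasiconcaveOn)
  refine ⟨p ⬝ᵥ M *ᵥ r, ⟨p, hp, fun j => ?_⟩, r, hr, fun i => ?_⟩
  · have : p ⬝ᵥ M *ᵥ r ≤ p ⬝ᵥ M *ᵥ Pi.single j 1 := hsaddle _ (single_mem_stdSimplex ℝ j) p hp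
    rwa [dotProduct_mulVec p M (Pi.single j 1), dotProduct_single_one] at this
  · have : Pi.single i 1 ⬝ᵥ M *ᵥ r ≤ p ⬝ᵥ M *ᵥ r := hsaddle r hr _ (single_mem_stdSimplex ℝ i)
    rwa [single_one_dotProduct] at this

namespace IsMatrixGameValue

lemma le_add (hv : IsMatrixGameValue M v) (hv' : IsMatrixGameValue M' v')
    (h : ∀ i j, M i j ≤ M' i j + δ) : v ≤ v' + δ := by
  obtain ⟨⟨p, hp, hpM⟩, -⟩ := hv
  obtain ⟨-, r, hr, hrM'⟩ := hv'
  have hrow (i : I) : (M *ᵥ r) i ≤ v' + δ :=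
    calc (M *ᵥ r) i = r ⬝ᵥ M i := dotProduct_comm _ _
      _ = r ⬝ᵥ M' i + r ⬝ᵥ (M i - M' i) := by rw [dotProduct_sub, add_sub_cancel]
      _ ≤ v' + δ := by
        refine add_le_add ((dotProduct_comm _ _).trans_le (hrM' i))
          (dotProduct_le_of_mem_stdSimplex hr fun j => ?_)
        simpa [add_comm] using h i j
  calc v ≤ r ⬝ᵥ (p ᵥ* M) := le_dotProduct_of_mem_stdSimplex hr hpM
    _ = p ⬝ᵥ (M *ᵥ r) := by rw [dotProduct_comm, dotProduct_mulVec]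
    _ ≤ v' + δ := dotProduct_le_of_mem_stdSimplex hp hrow

lemma abs_sub_le (hv : IsMatrixGameValue M v) (hv' : IsMatrixGameValue M' v')
    (h : ∀ i j, |M i j - M' i j| ≤ δ) : |v - v'| ≤ δ := by
  have h₁ := hv.le_add hv' (δ := δ) fun i j => by linarith [le_abs_self (M i j - M' i j), h i j]
  have h₂ := hv'.le_add hv (δ := δ) fun i j => by linarith [neg_abs_le (M i j - M' i j), h i j]
  rw [abs_sub_le_iff]
  constructor <;> linarith

lemma swap (hv : IsMatrixGameValue M v) (c : ℝ) :
    IsMatrixGameValue (of fun j i => c - M i j) (c - v) := by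
  obtain ⟨⟨p, hp, hpM⟩, r, hr, hrM⟩ := hv
  refine ⟨⟨r, hr, fun i => ?_⟩, p, hp, fun j => ?_⟩
  · have h : (r ᵥ* of fun j i => c - M i j) i = c - (M *ᵥ r) i :=
      (dotProduct_const_sub_of_mem_stdSimplex hr (M i) c).trans (by rw [dotProduct_comm]; rfl)
    rw [h]
    exact sub_le_sub_left (hrM i) c
  · have h : ((of fun j i => c - M i j) *ᵥ p) j = c - (p ᵥ* M) j :=
      (dotProduct_comm _ _).trans (dotProduct_const_sub_of_mem_stdSimplex hp (fun i => M i j) c)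
    rw [h]
    exact sub_le_sub_left (hpM j) c

lemma le_of_forall_le {c : ℝ} (hv : IsMatrixGameValue M v) (h : ∀ i j, M i j ≤ c) : v ≤ c := by
  obtain ⟨⟨p, hp, hpM⟩, r, hr, -⟩ := hv
  obtain ⟨j⟩ := nonempty_of_mem_stdSimplex hr
  exact (hpM j).trans (dotProduct_le_of_mem_stdSimplex hp fun i => h i j)

end IsMatrixGameValue

end MatrixGames

/-! ### Discounted values -/

section DiscountedValues

open Matrix

variable {K I J : Type*} {q : K → I → J → K} {g : K → I → J → ℝ} {l l' : ℝ} {v v' : K → ℝ}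

/-- The matrix game played at the state `x` when today's payoff has weight `l` and the
continuation value `v` has weight `1 - l`. -/
def shapleyMatrix (q : K → I → J → K) (g : K → I → J → ℝ) (l : ℝ) (v : K → ℝ) (x : K) :
    Matrix I J ℝ :=
  of fun i j => l * g x i j + (1 - l) * v (q x i j)

/-- `v` is the vector of values of the game with discount factor `l`, characterized as the solution
of the Shapley equation. -/
def IsDiscountedValue [Fintype I] [Fintype J] (q : K → I → J → K) (g : K → I → J → ℝ) (l : ℝ)
    (v : K → ℝ) : Prop :=
  ∀ x, IsMatrixGameValue (shapleyMatrix q g l v x) (v x)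

lemma shapleyMatrix_apply (q : K → I → J → K) (g : K → I → J → ℝ) (l : ℝ) (v : K → ℝ) (x : K)
    (i : I) (j : J) : shapleyMatrix q g l v x i j = l * g x i j + (1 - l) * v (q x i j) := rfl

lemma abs_shapleyMatrix_sub_le [Fintype K] (hl'1 : l' ≤ 1)
    (hgv : ∀ x i j y, |g x i j - v y| ≤ 1) (x : K) (i : I) (j : J) :
    |shapleyMatrix q g l v x i j - shapleyMatrix q g l' v' x i j| ≤
      |l - l'| + (1 - l') * dist v v' := by
  have hvv' : |v (q x i j) - v' (q x i j)| ≤ dist v v' :=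
    (Real.dist_eq _ _).symm.trans_le (dist_le_pi_dist v v' _)
  calc |shapleyMatrix q g l v x i j - shapleyMatrix q g l' v' x i j|
      = |(l - l') * (g x i j - v (q x i j)) + (1 - l') * (v (q x i j) - v' (q x i j))| := by
        simp only [shapleyMatrix_apply]
        ring_nf
    _ ≤ |l - l'| * |g x i j - v (q x i j)| + (1 - l') * |v (q x i j) - v' (q x i j)| := by
        refine (abs_add_le _ _).trans_eq ?_
        rw [abs_mul, abs_mul, abs_of_nonneg (sub_nonneg.2 hl'1)]
    _ ≤ |l - l'| + (1 - l') * dist v v' := by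
        gcongr
        exact mul_le_of_le_one_right (abs_nonneg _) (hgv x i j _)

variable [Fintype I] [Fintype J]

theorem exists_isDiscountedValue [Finite K] [Nonempty I] [Nonempty J] (q : K → I → J → K)
    (g : K → I → J → ℝ) (hl : l ∈ Set.Ioc 0 1) : ∃ v, IsDiscountedValue q g l v := by
  have := Fintype.ofFinite K
  choose val hval using exists_isMatrixGameValue (I := I) (J := J)
  let T (v : K → ℝ) (x : K) : ℝ := val (shapleyMatrix q g l v x)
  have hl1 : 0 ≤ 1 - l := sub_nonneg.2 hl.2
  have hT : ContractingWith (1 - l).toNNReal T := by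
    refine ⟨by simpa using hl.1, LipschitzWith.of_dist_le_mul fun v w => ?_⟩
    rw [Real.coe_toNNReal _ hl1]
    refine (dist_pi_le_iff (by positivity)).2 fun x =>
      (hval _).abs_sub_le (hval _) fun i j => ?_
    rw [shapleyMatrix_apply, shapleyMatrix_apply, add_sub_add_left_eq_sub, ← mul_sub, abs_mul,
      abs_of_nonneg hl1]
    exact mul_le_mul_of_nonneg_left (dist_le_pi_dist v w _) hl1
  refine ⟨ContractingWith.fixedPoint T hT, fun x => ?_⟩
  have hfix : T (ContractingWith.fixedPoint T hT) = _ := hT.fixedPoint_isFixedPt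
  have := hval (shapleyMatrix q g l (ContractingWith.fixedPoint T hT) x)
  rwa [show val _ = _ from congrFun hfix x] at this

namespace IsDiscountedValue

lemma swap (hv : IsDiscountedValue q g l v) :
    IsDiscountedValue (fun x j i => q x i j) (fun x j i => 1 - g x i j) l (fun x => 1 - v x) := by
  intro x
  convert (hv x).swap 1 using 1
  ext j i
  simp only [shapleyMatrix_apply, of_apply]
  ring

lemma le_one [Finite K] (hv : IsDiscountedValue q g l v) (hg : ∀ x i j, g x i j ≤ 1)
    (hl : l ∈ Set.Ioc 0 1) (x : K) : v x ≤ 1 := by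
  have : Nonempty K := ⟨x⟩
  obtain ⟨y, hy⟩ := Finite.exists_max v
  have h : v y ≤ l * 1 + (1 - l) * v y := (hv y).le_of_forall_le fun i j =>
    add_le_add (mul_le_mul_of_nonneg_left (hg y i j) hl.1.le)
      (mul_le_mul_of_nonneg_left (hy _) (sub_nonneg.2 hl.2))
  have : 0 ≤ l * (1 - v y) := by linarith
  linarith [hy x, nonneg_of_mul_nonneg_right this hl.1]

lemma mem_Icc [Finite K] (hv : IsDiscountedValue q g l v)
    (hg : ∀ x i j, g x i j ∈ Set.Icc (0 : ℝ) 1) (hl : l ∈ Set.Ioc 0 1) (x : K) :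
    v x ∈ Set.Icc (0 : ℝ) 1 :=
  ⟨by simpa using hv.swap.le_one (fun x j i => by simpa using (hg x i j).1) hl x,
    hv.le_one (fun x i j => (hg x i j).2) hl x⟩

lemma mul_dist_le [Fintype K] (hv : IsDiscountedValue q g l v) (hv' : IsDiscountedValue q g l' v')
    (hl'1 : l' ≤ 1) (hgv : ∀ x i j y, |g x i j - v y| ≤ 1) : l' * dist v v' ≤ |l - l'| := by
  have hle : dist v v' ≤ |l - l'| + (1 - l') * dist v v' :=
    (dist_pi_le_iff (add_nonneg (abs_nonneg _)
      (mul_nonneg (sub_nonneg.2 hl'1) dist_nonneg))).2 fun x =>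
        (hv x).abs_sub_le (hv' x) (abs_shapleyMatrix_sub_le hl'1 hgv x)
  linarith

end IsDiscountedValue

theorem continuousOn_of_isDiscountedValue [Finite K] (hg : ∀ x i j, g x i j ∈ Set.Icc (0 : ℝ) 1)
    {V : ℝ → K → ℝ} (hV : ∀ l ∈ Set.Ioc (0 : ℝ) 1, IsDiscountedValue q g l (V l)) :
    ContinuousOn V (Set.Ioc 0 1) := by
  have := Fintype.ofFinite K
  have hdist {l l' : ℝ} (hl : l ∈ Set.Ioc (0 : ℝ) 1) (hl' : l' ∈ Set.Ioc (0 : ℝ) 1) :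
      l' * dist (V l) (V l') ≤ |l - l'| :=
    (hV l hl).mul_dist_le (hV l' hl') hl'.2 fun x i j y =>
      by simpa [Real.dist_eq] using Real.dist_le_of_mem_Icc (hg x i j) ((hV l hl).mem_Icc hg hl y)
  intro l' hl'
  refine tendsto_iff_dist_tendsto_zero.2 ?_
  refine squeeze_zero' (Eventually.of_forall fun _ => dist_nonneg)
    (eventually_mem_nhdsWithin.mono fun l hl => (le_div_iff₀' hl'.1).2 (hdist hl hl')) ?_
  have : Continuous fun l => |l - l'| / l' := by fun_prop
  simpa using (this.tendsto l').mono_left nhdsWithin_le_nhds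

end DiscountedValues

/-! ### Kernels of matrix games of value zero -/

section Kernels

open Matrix

variable {A B R : Type*}

/-- The vector-matrix equation `u ᵥ* kernelMatrix S U M = 0` says that `u` is supported on `S` and
that `u ᵥ* M` vanishes on `U`. -/
def kernelMatrix [DecidableEq A] [DecidableEq B] [Zero R] [One R] (S : Finset A) (U : Finset B)
    (M : Matrix A B R) : Matrix A (B ⊕ A) R :=
  fromCols (of fun a b => if b ∈ U then M a b else 0) (diagonal fun a => if a ∈ S then 0 else 1)

/-- The Gram determinant of the rows of `kernelMatrix S U M`. -/
def kernelGramDet [Fintype A] [DecidableEq A] [Fintype B] [DecidableEq B] [CommRing R]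
    (S : Finset A) (U : Finset B) (M : Matrix A B R) : R :=
  (kernelMatrix S U M * (kernelMatrix S U M)ᵀ).det

lemma map_kernelGramDet [Fintype A] [DecidableEq A] [Fintype B] [DecidableEq B] [CommRing R]
    {R' : Type*} [CommRing R'] (φ : R →+* R') (S : Finset A) (U : Finset B) (M : Matrix A B R) :
    φ (kernelGramDet S U M) = kernelGramDet S U (M.map φ) := by
  have hmap : (kernelMatrix S U M).map φ = kernelMatrix S U (M.map φ) := by
    ext a (b | a')
    · simp only [kernelMatrix, map_apply, fromCols_apply_inl, of_apply, apply_ite φ, map_zero]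
    · simp only [kernelMatrix, map_apply, fromCols_apply_inr, diagonal_apply, apply_ite φ,
        map_zero, map_one]
  rw [kernelGramDet, RingHom.map_det, RingHom.mapMatrix_apply, Matrix.map_mul, transpose_map, hmap,
    kernelGramDet]

lemma vecMul_kernelMatrix_eq_zero_iff [Fintype A] [DecidableEq A] [DecidableEq B]
    [Semiring R] {S : Finset A} {U : Finset B} {M : Matrix A B R} {u : A → R} :
    u ᵥ* kernelMatrix S U M = 0 ↔ (∀ a ∉ S, u a = 0) ∧ ∀ b ∈ U, (u ᵥ* M) b = 0 := by
  have hleft (b : B) : (u ᵥ* of fun a b => if b ∈ U then M a b else 0) b =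
      if b ∈ U then (u ᵥ* M) b else 0 := by
    split_ifs with hb <;> simp [vecMul, dotProduct, hb]
  rw [kernelMatrix, vecMul_fromCols, ← Sum.elim_zero_zero, Sum.elim_eq_iff, and_comm]
  simp [funext_iff, hleft, vecMul_diagonal]

lemma det_mul_transpose_eq_zero_iff [Fintype A] [DecidableEq A] [Fintype B] (N : Matrix A B ℝ) :
    (N * Nᵀ).det = 0 ↔ ∃ u ≠ 0, u ᵥ* N = 0 := by
  rw [← exists_vecMul_eq_zero_iff, ← conjTranspose_eq_transpose_of_trivial]
  simp only [vecMul_self_mul_conjTranspose_eq_zero]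

lemma continuous_kernelMatrix [DecidableEq A] [DecidableEq B] [TopologicalSpace R] [Zero R] [One R]
    (S : Finset A) (U : Finset B) : Continuous (kernelMatrix S U : Matrix A B R → _) := by
  refine continuous_matrix fun a => Sum.rec (fun b => ?_) fun _ => continuous_const
  by_cases hb : b ∈ U
  · simpa [kernelMatrix, hb] using continuous_id.matrix_elem a b
  · simpa [kernelMatrix, hb] using continuous_const

variable [Fintype A]

/-- The mixed actions of the row player which guarantee a nonnegative payoff in `M`. -/
def safeActions (M : Matrix A B ℝ) : Set (A → ℝ) :=
  {x ∈ stdSimplex ℝ A | ∀ b, 0 ≤ (x ᵥ* M) b}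

lemma isCompact_safeActions (M : Matrix A B ℝ) : IsCompact (safeActions M) := by
  have hclosed : IsClosed {x : A → ℝ | ∀ b, 0 ≤ (x ᵥ* M) b} := by
    simp only [Set.ofPred_forall]
    exact isClosed_iInter fun b => isClosed_le continuous_const (by fun_prop)
  exact (isCompact_stdSimplex ℝ A).inter_right hclosed

lemma eventually_nonneg_add_mul {c d : ℝ} (hc : 0 ≤ c) (hcd : c = 0 → d = 0) :
    ∀ᶠ s : ℝ in 𝓝 0, 0 ≤ c + s * d := by
  rcases hc.eq_or_lt' with rfl | hpos
  · simp [hcd rfl]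
  · have : Tendsto (fun s => c + s * d) (𝓝 0) (𝓝 (c + 0 * d)) :=
      (by fun_prop : Continuous fun s => c + s * d).tendsto 0
    rw [zero_mul, add_zero] at this
    exact (this.eventually_const_lt hpos).mono fun _ => le_of_lt

lemma eq_zero_of_mem_extremePoints {E : Type*} [AddCommGroup E] [Module ℝ E] {s : Set E} {x w : E}
    (hx : x ∈ s.extremePoints ℝ) (hw : ∀ᶠ t : ℝ in 𝓝 0, x + t • w ∈ s) : w = 0 := by
  have hneg : Tendsto (fun t : ℝ => -t) (𝓝 0) (𝓝 0) := by
    simpa using (continuous_neg (G := ℝ)).tendsto 0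
  obtain ⟨t, ⟨hpos, hneg⟩, ht⟩ := (((hw.and (hneg.eventually hw)).filter_mono
    nhdsWithin_le_nhds).and (self_mem_nhdsWithin (s := Set.Ioi (0 : ℝ)))).exists
  have hmid : x ∈ openSegment ℝ (x + t • w) (x + (-t) • w) :=
    ⟨1 / 2, 1 / 2, by norm_num, by norm_num, by norm_num, by module⟩
  have := (mem_extremePoints.1 hx).2 _ hpos _ hneg hmid
  simpa [(ht : (0 : ℝ) < t).ne'] using this.1

lemma eq_sum_smul_of_mem_extremePoints [Finite B] {M : Matrix A B ℝ} {x u : A → ℝ}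
    (hx : x ∈ (safeActions M).extremePoints ℝ) (hsupp : ∀ a, x a = 0 → u a = 0)
    (htight : ∀ b, (x ᵥ* M) b = 0 → (u ᵥ* M) b = 0) : u = (∑ a, u a) • x := by
  have hxs : x ∈ safeActions M := hx.1
  suffices u - (∑ a, u a) • x = 0 from sub_eq_zero.1 this
  refine eq_zero_of_mem_extremePoints hx ?_
  have hnonneg : ∀ᶠ t : ℝ in 𝓝 0, ∀ a, 0 ≤ x a + t * (u - (∑ a, u a) • x) a :=
    eventually_all.2 fun a => eventually_nonneg_add_mul (hxs.1.1 a) fun ha => by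
      simp [ha, hsupp a ha]
  have hsafe : ∀ᶠ t : ℝ in 𝓝 0, ∀ b, 0 ≤ (x ᵥ* M) b + t * ((u - (∑ a, u a) • x) ᵥ* M) b :=
    eventually_all.2 fun b => eventually_nonneg_add_mul (hxs.2 b) fun hb => by
      simp [sub_vecMul, smul_vecMul, hb, htight b hb]
  filter_upwards [hnonneg, hsafe] with t hnonneg hsafe
  refine ⟨⟨hnonneg, ?_⟩, fun b => ?_⟩
  · simp [Finset.sum_add_distrib, ← Finset.mul_sum, hxs.1.2]
  · simpa only [add_vecMul, smul_vecMul, Pi.add_apply, Pi.smul_apply, smul_eq_mul] using hsafe b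

variable [Fintype B]

section ComplementarySlackness

variable {M : Matrix A B ℝ} {x : A → ℝ} {y : B → ℝ}

lemma dotProduct_mulVec_eq_zero_of_mem_safeActions (hx : x ∈ safeActions M)
    (hy : y ∈ stdSimplex ℝ B) (hyM : ∀ a, (M *ᵥ y) a ≤ 0) : x ⬝ᵥ M *ᵥ y = 0 := by
  refine le_antisymm (dotProduct_le_of_mem_stdSimplex hx.1 hyM) ?_
  rw [dotProduct_mulVec, dotProduct_comm]
  exact le_dotProduct_of_mem_stdSimplex hy hx.2

lemma mulVec_eq_zero_of_mem_safeActions (hx : x ∈ safeActions M) (hy : y ∈ stdSimplex ℝ B)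
    (hyM : ∀ a, (M *ᵥ y) a ≤ 0) {a : A} (ha : x a ≠ 0) : (M *ᵥ y) a = 0 := by
  have hsum := dotProduct_mulVec_eq_zero_of_mem_safeActions hx hy hyM
  have := (Finset.sum_eq_zero_iff_of_nonpos fun a _ =>
    mul_nonpos_of_nonneg_of_nonpos (hx.1.1 a) (hyM a)).1 hsum a (Finset.mem_univ a)
  exact (mul_eq_zero.1 this).resolve_left ha

lemma vecMul_eq_zero_of_mem_safeActions (hx : x ∈ safeActions M) (hy : y ∈ stdSimplex ℝ B)
    (hyM : ∀ a, (M *ᵥ y) a ≤ 0) {b : B} (hb : y b ≠ 0) : (x ᵥ* M) b = 0 := by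
  have hsum := dotProduct_mulVec_eq_zero_of_mem_safeActions hx hy hyM
  rw [dotProduct_mulVec] at hsum
  have := (Finset.sum_eq_zero_iff_of_nonneg fun b _ =>
    mul_nonneg (hx.2 b) (hy.1 b)).1 hsum b (Finset.mem_univ b)
  exact (mul_eq_zero.1 this).resolve_right hb

lemma dotProduct_mulVec_eq_zero_of_perturbation (hx : x ∈ safeActions M) (hy : y ∈ stdSimplex ℝ B)
    (hyM : ∀ a, (M *ᵥ y) a ≤ 0) {C : Matrix A B ℝ} {t : ℝ} (ht : t ≠ 0) {u : A → ℝ}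
    (hsupp : ∀ a, x a = 0 → u a = 0)
    (htight : ∀ b, (x ᵥ* M) b = 0 → (u ᵥ* (M - t • C)) b = 0) : u ⬝ᵥ C *ᵥ y = 0 := by
  have huM : u ⬝ᵥ M *ᵥ y = 0 := Finset.sum_eq_zero fun a _ => by
    by_cases ha : x a = 0
    · rw [hsupp a ha, zero_mul]
    · rw [mulVec_eq_zero_of_mem_safeActions hx hy hyM ha, mul_zero]
  have huMt : u ⬝ᵥ (M - t • C) *ᵥ y = 0 := by
    rw [dotProduct_mulVec]
    refine Finset.sum_eq_zero fun b _ => ?_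
    by_cases hb : y b = 0
    · rw [hb, mul_zero]
    · rw [htight b (vecMul_eq_zero_of_mem_safeActions hx hy hyM hb), zero_mul]
  rwa [sub_mulVec, smul_mulVec, dotProduct_sub, huM, zero_sub, neg_eq_zero, dotProduct_smul,
    smul_eq_zero_iff_right ht] at huMt

end ComplementarySlackness

lemma dotProduct_mulVec_pos {C : Matrix A B ℝ} (hC : ∀ a b, 0 < C a b) {x : A → ℝ} {y : B → ℝ}
    (hx : x ∈ stdSimplex ℝ A) (hy : y ∈ stdSimplex ℝ B) : 0 < x ⬝ᵥ C *ᵥ y := by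
  obtain ⟨a⟩ := nonempty_of_mem_stdSimplex hx
  obtain ⟨b⟩ := nonempty_of_mem_stdSimplex hy
  have : Nonempty (A × B) := ⟨(a, b)⟩
  obtain ⟨⟨a₀, b₀⟩, hmin⟩ := Finite.exists_min fun ab : A × B => C ab.1 ab.2
  refine (hC a₀ b₀).trans_le (le_dotProduct_of_mem_stdSimplex hx fun a => ?_)
  exact (le_dotProduct_of_mem_stdSimplex hy fun b => hmin (a, b)).trans_eq (dotProduct_comm _ _)

lemma exists_ne_zero_det_mul_transpose_ne_zero [DecidableEq A] {N : ℝ → Matrix A B ℝ}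
    (hN : Continuous N) (h0 : (N 0 * (N 0)ᵀ).det ≠ 0) : ∃ t ≠ 0, (N t * (N t)ᵀ).det ≠ 0 := by
  have hcont : Continuous fun t => (N t * (N t)ᵀ).det :=
    (hN.matrix_mul hN.matrix_transpose).matrix_det
  obtain ⟨t, ht, ht0⟩ := (((hcont.continuousAt.eventually_ne h0).filter_mono
    nhdsWithin_le_nhds).and (self_mem_nhdsWithin (s := {0}ᶜ))).exists
  exact ⟨t, ht0, ht⟩

-- For an extreme optimal action `x`, the vectors supported like `x` and tight where `x` is form the
-- line `ℝ x`. For `t ≠ 0` such vectors `u` relative to `M - t • C` satisfy `u ⬝ᵥ C *ᵥ y = 0`, so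
-- adjoining the column `C *ᵥ y` does not change the kernel, and makes it trivial at `t = 0`.
theorem exists_kernelGramDet_eq_zero [DecidableEq A] [DecidableEq B] {M C : Matrix A B ℝ}
    (hM : IsMatrixGameValue M 0) (hC : ∀ a b, 0 < C a b) :
    ∃ S U, kernelGramDet S U M = 0 ∧ ∃ t : ℝ, kernelGramDet S U (M - t • C) ≠ 0 := by
  obtain ⟨⟨p, hp, hpM⟩, y, hy, hyM⟩ := hM
  obtain ⟨x, hxe⟩ := (isCompact_safeActions M).extremePoints_nonempty ⟨p, hp, hpM⟩
  have hx : x ∈ safeActions M := hxe.1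
  let S : Finset A := {a | x a ≠ 0}
  let U : Finset B := {b | (x ᵥ* M) b = 0}
  let augmented (t : ℝ) := fromCols (kernelMatrix S U (M - t • C)) (replicateCol Unit (C *ᵥ y))
  have haug (t : ℝ) (u : A → ℝ) : u ᵥ* augmented t = 0 ↔
      ((∀ a ∉ S, u a = 0) ∧ ∀ b ∈ U, (u ᵥ* (M - t • C)) b = 0) ∧ u ⬝ᵥ C *ᵥ y = 0 := by
    rw [vecMul_fromCols, ← Sum.elim_zero_zero, Sum.elim_eq_iff, vecMul_kernelMatrix_eq_zero_iff]
    simp [funext_iff, vecMul, dotProduct]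
  have haug0 : (augmented 0 * (augmented 0)ᵀ).det ≠ 0 := by
    rw [Ne, det_mul_transpose_eq_zero_iff]
    rintro ⟨u, hu0, hu⟩
    rw [haug] at hu
    obtain ⟨⟨huS, huU⟩, huC⟩ := hu
    have hux : u = (∑ a, u a) • x := eq_sum_smul_of_mem_extremePoints hxe
      (fun a ha => huS a (by simp [S, ha])) fun b hb => by simpa using huU b (by simp [U, hb])
    rw [hux, smul_dotProduct, smul_eq_zero_iff_left (dotProduct_mulVec_pos hC hx.1 hy).ne'] at huC
    exact hu0 (by rw [hux, huC, zero_smul])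
  have hpert : Continuous fun t : ℝ => M - t • C := by fun_prop
  have hcont : Continuous augmented := continuous_matrix fun a => Sum.rec
    (fun _ => ((continuous_kernelMatrix S U).comp hpert).matrix_elem a _) fun _ => continuous_const
  obtain ⟨t, ht0, ht⟩ := exists_ne_zero_det_mul_transpose_ne_zero hcont haug0
  refine ⟨S, U, (det_mul_transpose_eq_zero_iff _).2 ⟨x, ?_, vecMul_kernelMatrix_eq_zero_iff.2
    ⟨by simp [S], by simp [U]⟩⟩, t, fun hdet => ht ?_⟩
  · rintro rfl
    simpa using hx.1.2
  · obtain ⟨u, hu0, hu⟩ := (det_mul_transpose_eq_zero_iff _).1 hdet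
    have hu' := vecMul_kernelMatrix_eq_zero_iff.1 hu
    refine (det_mul_transpose_eq_zero_iff _).2 ⟨u, hu0, (haug t u).2 ⟨hu', ?_⟩⟩
    exact dotProduct_mulVec_eq_zero_of_perturbation hx hy hyM ht0
      (fun a ha => hu'.1 a (by simp [S, ha])) fun b hb => hu'.2 b (by simp [U, hb])

end Kernels

/-! ### The algebraic curve of discounted values -/

section StationaryStrategies

open Matrix

variable {K L : Type*} [DecidableEq K]

/-- The matrix `1 - (1 - l) P`, where `P` is the transition matrix of the deterministic Markov
chain `s`: its inverse, multiplied by `l`, computes `l`-discounted payoffs along `s`. -/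
def discountMatrix {R : Type*} [CommRing R] (l : R) (s : K → K) : Matrix K K R :=
  1 - (1 - l) • of fun x => Pi.single (s x) 1

lemma map_discountMatrix {R R' : Type*} [CommRing R] [CommRing R'] (φ : R →+* R') (l : R)
    (s : K → K) : (discountMatrix l s).map φ = discountMatrix (φ l) s := by
  ext x y
  simp [discountMatrix, Matrix.one_apply, Pi.single_apply, apply_ite φ]

variable [Fintype K] [Fintype L]

lemma nonneg_of_nonneg_one_sub_smul_mulVec {Q : Matrix K K ℝ} (hQ : ∀ x, Q x ∈ stdSimplex ℝ K)
    {t : ℝ} (ht : t ∈ Set.Ico 0 1) {w : K → ℝ} (hw : ∀ x, 0 ≤ ((1 - t • Q) *ᵥ w) x) (x : K) :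
    0 ≤ w x := by
  have : Nonempty K := ⟨x⟩
  obtain ⟨y, hy⟩ := Finite.exists_min w
  have hQw : w y ≤ (Q *ᵥ w) y := le_dotProduct_of_mem_stdSimplex (hQ y) hy
  have hwy := hw y
  simp only [sub_mulVec, one_mulVec, smul_mulVec, Pi.sub_apply, Pi.smul_apply, smul_eq_mul] at hwy
  have : 0 ≤ (1 - t) * w y := by linarith [mul_le_mul_of_nonneg_left hQw ht.1]
  exact (nonneg_of_mul_nonneg_right this (sub_pos.2 ht.2)).trans (hy x)

lemma det_one_sub_smul_ne_zero {Q : Matrix K K ℝ} (hQ : ∀ x, Q x ∈ stdSimplex ℝ K) {t : ℝ}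
    (ht : t ∈ Set.Ico 0 1) : (1 - t • Q).det ≠ 0 := by
  intro hdet
  obtain ⟨u, hu, hu0⟩ := exists_mulVec_eq_zero_iff.2 hdet
  refine hu (funext fun x => le_antisymm ?_ ?_)
  · simpa using nonneg_of_nonneg_one_sub_smul_mulVec hQ ht (w := -u) (by simp [mulVec_neg, hu0]) x
  · exact nonneg_of_nonneg_one_sub_smul_mulVec hQ ht (by simp [hu0]) x

lemma det_one_sub_smul_pos {Q : Matrix K K ℝ} (hQ : ∀ x, Q x ∈ stdSimplex ℝ K) {t : ℝ}
    (ht : t ∈ Set.Ico 0 1) : 0 < (1 - t • Q).det := by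
  by_contra! hneg
  have hcont : Continuous fun s : ℝ => (1 - s • Q).det :=
    Continuous.matrix_det (by fun_prop)
  obtain ⟨s, hs, hs0⟩ := intermediate_value_Icc' ht.1 hcont.continuousOn ⟨hneg, by simp⟩
  exact det_one_sub_smul_ne_zero hQ ⟨hs.1, hs.2.trans_lt ht.2⟩ hs0

lemma cramer_one_sub_smul_nonneg {Q : Matrix K K ℝ} (hQ : ∀ x, Q x ∈ stdSimplex ℝ K) {t : ℝ}
    (ht : t ∈ Set.Ico 0 1) {d : K → ℝ} (hd : ∀ x, 0 ≤ d x) (k : K) :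
    0 ≤ cramer (1 - t • Q) d k := by
  have hdet := det_one_sub_smul_pos hQ ht
  have hunit : IsUnit (1 - t • Q).det := isUnit_iff_ne_zero.2 hdet.ne'
  rw [← det_smul_inv_mulVec_eq_cramer _ _ hunit]
  refine mul_nonneg hdet.le (nonneg_of_nonneg_one_sub_smul_mulVec hQ ht (fun x => ?_) k)
  rw [mulVec_mulVec, mul_nonsing_inv _ hunit, one_mulVec]
  exact hd x

lemma cramer_mulVec {R : Type*} [CommRing R] (A : Matrix K K R) (v : K → R) :
    cramer A (A *ᵥ v) = A.det • v := by
  rw [cramer_eq_adjugate_mulVec, mulVec_mulVec, adjugate_mul, smul_mulVec, one_mulVec]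

lemma prod_mem_stdSimplex {p : K → L → ℝ} (hp : ∀ x, p x ∈ stdSimplex ℝ L) :
    (fun α : K → L => ∏ x, p x (α x)) ∈ stdSimplex ℝ (K → L) :=
  ⟨fun α => Finset.prod_nonneg fun x _ => (hp x).1 _, by
    rw [← Fintype.prod_sum, Finset.prod_eq_one fun x _ => (hp x).2]⟩

lemma sum_prod_mul_det {R : Type*} [CommRing R] (p : K → L → R) (rows : K → L → K → R) :
    ∑ α : K → L, (∏ x, p x (α x)) * (of fun x => rows x (α x)).det =
      (of fun x => ∑ i, p x i • rows x i).det := by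
  classical
  symm
  refine ((detRowAlternating (n := K) (R := R)).toMultilinearMap.map_sum
    (fun x i => p x i • rows x i)).trans (Finset.sum_congr rfl fun α _ => ?_)
  rw [MultilinearMap.map_smul_univ]
  rfl

lemma sum_prod_mul_cramer {R : Type*} [CommRing R] (p : K → L → R) (rows : K → L → K → R)
    (b : K → L → R) (k : K) :
    ∑ α : K → L, (∏ x, p x (α x)) * cramer (of fun x => rows x (α x)) (fun x => b x (α x)) k =
      cramer (of fun x => ∑ i, p x i • rows x i) (fun x => p x ⬝ᵥ b x) k := by
  have h := sum_prod_mul_det p fun x i => Function.update (rows x i) k (b x i)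
  simp only [cramer_apply]
  convert h using 4
  · ext x y
    by_cases hy : y = k <;> simp [hy]
  · ext x y
    by_cases hy : y = k
    · simp [hy, dotProduct]
    · simp [hy]

lemma det_discountMatrix_pos {l : ℝ} (hl : l ∈ Set.Ioc 0 1) (s : K → K) :
    0 < (discountMatrix l s).det :=
  det_one_sub_smul_pos (fun _ => single_mem_stdSimplex ℝ _) ⟨by linarith [hl.2], by linarith [hl.1]⟩

/-- The transition matrix of the Markov chain which at the state `x` moves to `s x i` with
probability `p x i`. -/
def mixedTransition (p : K → L → ℝ) (s : K → L → K) : Matrix K K ℝ :=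
  of fun x => ∑ i, p x i • Pi.single (s x i) 1

lemma mixedTransition_mulVec (p : K → L → ℝ) (s : K → L → K) (v : K → ℝ) (x : K) :
    (mixedTransition p s *ᵥ v) x = p x ⬝ᵥ fun i => v (s x i) := by
  change (∑ i, p x i • Pi.single (s x i) 1) ⬝ᵥ v = _
  simp only [sum_dotProduct, smul_dotProduct, single_one_dotProduct, smul_eq_mul]
  rfl

lemma mixedTransition_mem_stdSimplex {p : K → L → ℝ} (hp : ∀ x, p x ∈ stdSimplex ℝ L)
    (s : K → L → K) (x : K) : mixedTransition p s x ∈ stdSimplex ℝ K :=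
  (convex_stdSimplex ℝ K).sum_mem (fun i _ => (hp x).1 i) (hp x).2
    fun _ _ => single_mem_stdSimplex ℝ _

lemma sum_prod_mul_cramer_sub_det {p : K → L → ℝ} (hp : ∀ x, p x ∈ stdSimplex ℝ L)
    (s : K → L → K) (b : K → L → ℝ) (l : ℝ) (v : K → ℝ) (k : K) :
    ∑ α : K → L, (∏ x, p x (α x)) *
        (cramer (discountMatrix l fun x => s x (α x)) (fun x => b x (α x)) k -
          v k * (discountMatrix l fun x => s x (α x)).det) =
      cramer (1 - (1 - l) • mixedTransition p s)
        (fun x => p x ⬝ᵥ (fun i => b x i + (1 - l) * v (s x i)) - v x) k := by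
  let rows (x : K) (i : L) : K → ℝ := (1 : Matrix K K ℝ) x - (1 - l) • Pi.single (s x i) 1
  have hrows : (of fun x => ∑ i, p x i • rows x i) = 1 - (1 - l) • mixedTransition p s := by
    ext x : 1
    simp only [rows, of_apply, smul_sub, Finset.sum_sub_distrib, ← Finset.sum_smul, (hp x).2,
      one_smul, smul_comm _ (1 - l), ← Finset.smul_sum]
    rfl
  calc _ = cramer (1 - (1 - l) • mixedTransition p s) (fun x => p x ⬝ᵥ b x) k -
        v k * (1 - (1 - l) • mixedTransition p s).det := by
        rw [← hrows, ← sum_prod_mul_det, ← sum_prod_mul_cramer, Finset.mul_sum,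
          ← Finset.sum_sub_distrib]
        exact Finset.sum_congr rfl fun α _ => by rw [mul_sub, mul_left_comm]; rfl
    _ = cramer (1 - (1 - l) • mixedTransition p s)
        ((fun x => p x ⬝ᵥ b x) - (1 - (1 - l) • mixedTransition p s) *ᵥ v) k := by
        rw [map_sub, cramer_mulVec, Pi.sub_apply, Pi.smul_apply, smul_eq_mul, mul_comm (v k)]
    _ = _ := by
        refine congrArg (cramer _ · k) (funext fun x => ?_)
        have : (fun i => b x i + (1 - l) * v (s x i)) = b x + (1 - l) • fun i => v (s x i) := rfl
        rw [this, dotProduct_add, dotProduct_smul, ← mixedTransition_mulVec]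
        simp only [sub_mulVec, one_mulVec, smul_mulVec, Pi.sub_apply, Pi.smul_apply]
        ring

end StationaryStrategies

section AlgebraicCurve

open Matrix Polynomial
open scoped Polynomial.Bivariate

section StationaryMatrix

variable {K I J : Type*} [Fintype K] [DecidableEq K]

/-- The matrix game between pure stationary strategies `α` and `β` whose entry is the difference
between the `l`-discounted payoff from the initial state `k` and `z`, multiplied by the positive
number `(discountMatrix l _).det` in order to be polynomial in `l` and `z`. -/
def stationaryMatrix {R : Type*} [CommRing R] (q : K → I → J → K) (g : K → I → J → R) (l z : R)
    (k : K) : Matrix (K → I) (K → J) R :=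
  of fun α β =>
    cramer (discountMatrix l fun x => q x (α x) (β x)) (fun x => l * g x (α x) (β x)) k -
      z * (discountMatrix l fun x => q x (α x) (β x)).det

lemma map_stationaryMatrix {R R' : Type*} [CommRing R] [CommRing R'] (φ : R →+* R')
    (q : K → I → J → K) (g : K → I → J → R) (l z : R) (k : K) :
    (stationaryMatrix q g l z k).map φ =
      stationaryMatrix q (fun x i j => φ (g x i j)) (φ l) (φ z) k := by
  ext α β
  simp only [stationaryMatrix, map_apply, of_apply, map_sub, map_mul, RingHom.map_det, cramer_apply,
    RingHom.mapMatrix_apply, map_updateCol, map_discountMatrix, Function.comp_def]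

variable {q : K → I → J → K} {g : K → I → J → ℝ} {l : ℝ} {v : K → ℝ}

lemma stationaryMatrix_add_eq_sub_smul (q : K → I → J → K) (g : K → I → J → ℝ) (l z t : ℝ)
    (k : K) : stationaryMatrix q g l (z + t) k = stationaryMatrix q g l z k -
      t • of fun α β => (discountMatrix l fun x => q x (α x) (β x)).det := by
  ext α β
  simp only [stationaryMatrix, of_apply, Matrix.sub_apply, Matrix.smul_apply, smul_eq_mul]
  ring

theorem IsDiscountedValue.isMatrixGameValue_stationaryMatrix [Fintype I] [Fintype J]
    (hv : IsDiscountedValue q g l v) (hl : l ∈ Set.Ioc 0 1) (k : K) :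
    IsMatrixGameValue (stationaryMatrix q g l (v k) k) 0 := by
  choose p hp hpv using fun x => (hv x).1
  choose r hr hrv using fun x => (hv x).2
  have hl' : 1 - l ∈ Set.Ico (0 : ℝ) 1 := ⟨by linarith [hl.2], by linarith [hl.1]⟩
  refine ⟨⟨_, prod_mem_stdSimplex hp, fun β => ?_⟩, _, prod_mem_stdSimplex hr, fun α => ?_⟩
  · refine (cramer_one_sub_smul_nonneg (mixedTransition_mem_stdSimplex hp fun x i => q x i (β x))
      hl' (fun x => sub_nonneg.2 (hpv x (β x))) k).trans_eq ?_
    exact (sum_prod_mul_cramer_sub_det hp (fun x i => q x i (β x))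
      (fun x i => l * g x i (β x)) l v k).symm
  · rw [mulVec, dotProduct_comm]
    refine (sum_prod_mul_cramer_sub_det hr (fun x j => q x (α x) j)
      (fun x j => l * g x (α x) j) l v k).trans_le (neg_nonneg.1 ?_)
    refine (cramer_one_sub_smul_nonneg (mixedTransition_mem_stdSimplex hr fun x j => q x (α x) j)
      hl' (fun x => sub_nonneg.2 (hrv x (α x))) k).trans_eq ?_
    rw [← Pi.neg_apply, ← map_neg]
    refine congrArg (cramer _ · k) (funext fun x => ?_)
    rw [Pi.neg_apply, neg_sub, dotProduct_comm]
    rfl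

end StationaryMatrix

theorem exists_polynomial_evalEval_eq_zero {K I J : Type*} [Finite K] [Fintype I] [Fintype J]
    (q : K → I → J → K) (g : K → I → J → ℝ) (k : K) : ∃ P : ℝ[X][Y], P ≠ 0 ∧
      ∀ l ∈ Set.Ioc (0 : ℝ) 1, ∀ v, IsDiscountedValue q g l v → P.evalEval (v k) l = 0 := by
  classical
  have := Fintype.ofFinite K
  let D (S : Finset (K → I)) (U : Finset (K → J)) : ℝ[X][Y] :=
    kernelGramDet S U (stationaryMatrix q (fun x i j => CC (g x i j)) Y (C X) k)
  have hD (S : Finset (K → I)) (U : Finset (K → J)) (l z : ℝ) :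
      (D S U).evalEval z l = kernelGramDet S U (stationaryMatrix q g l z k) := by
    rw [← coe_evalEvalRingHom, map_kernelGramDet, map_stationaryMatrix]
    simp
  refine ⟨∏ SU : Finset (K → I) × Finset (K → J), if D SU.1 SU.2 = 0 then 1 else D SU.1 SU.2,
    Finset.prod_ne_zero_iff.2 fun SU _ => ?_, fun l hl v hv => ?_⟩
  · split_ifs with h
    exacts [one_ne_zero, h]
  · obtain ⟨S, U, hzero, t, hne⟩ := exists_kernelGramDet_eq_zero
      (hv.isMatrixGameValue_stationaryMatrix hl k)
      (C := of fun α β => (discountMatrix l fun x => q x (α x) (β x)).det)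
      fun α β => det_discountMatrix_pos hl _
    have hDne : D S U ≠ 0 := by
      intro h0
      rw [← stationaryMatrix_add_eq_sub_smul, ← hD, h0, evalEval_zero] at hne
      exact hne rfl
    rw [← coe_evalEvalRingHom, map_prod]
    refine Finset.prod_eq_zero (Finset.mem_univ (S, U)) ?_
    rw [if_neg hDne, coe_evalEvalRingHom, hD, hzero]

end AlgebraicCurve

/-! ### Bounded variation of algebraic functions -/

section BoundedVariation

open MeasureTheory Polynomial
open scoped ENNReal Polynomial.Bivariate

section Indicatrix

variable {α : Type*} [ConditionallyCompleteLinearOrder α] [TopologicalSpace α] [OrderTopology α]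
  [DenselyOrdered α] {f : α → ℝ} {s : Set α}

lemma exists_mem_Ioo_eq_of_mem_uIoo {a b : α} (hab : a ≤ b) (hf : ContinuousOn f (Set.Icc a b))
    {c : ℝ} (hc : c ∈ Set.uIoo (f a) (f b)) : ∃ x ∈ Set.Ioo a b, f x = c := by
  rcases le_total (f a) (f b) with h | h
  · exact intermediate_value_Ioo hab hf (Set.uIoo_of_le h ▸ hc)
  · exact intermediate_value_Ioo' hab hf (Set.uIoo_of_ge h ▸ hc)

lemma card_crossings_le_encard_fiber [s.OrdConnected] (hf : ContinuousOn f s) {u : ℕ → α}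
    (hu : Monotone u) (hus : ∀ i, u i ∈ s) (n : ℕ) (c : ℝ)
    [DecidablePred fun i => c ∈ Set.uIoo (f (u i)) (f (u (i + 1)))] :
    (({i ∈ Finset.range n | c ∈ Set.uIoo (f (u i)) (f (u (i + 1)))}.card : ℕ) : ℕ∞) ≤
      {x ∈ s | f x = c}.encard := by
  have hsub (i : ℕ) : Set.Icc (u i) (u (i + 1)) ⊆ s := Set.Icc_subset s (hus i) (hus (i + 1))
  have hcross (i : ℕ) : ∃ x, c ∈ Set.uIoo (f (u i)) (f (u (i + 1))) →
      x ∈ Set.Ioo (u i) (u (i + 1)) ∧ f x = c := by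
    by_cases hi : c ∈ Set.uIoo (f (u i)) (f (u (i + 1)))
    · obtain ⟨x, hx⟩ := exists_mem_Ioo_eq_of_mem_uIoo (hu i.le_succ) (hf.mono (hsub i)) hi
      exact ⟨x, fun _ => hx⟩
    · exact ⟨u i, fun h => absurd h hi⟩
  choose x hx using hcross
  rw [← Set.encard_coe_eq_coe_finsetCard, Finset.coe_filter]
  refine Set.encard_le_encard_of_injOn (f := x)
    (fun i hi => ⟨hsub i (Set.Ioo_subset_Icc_self (hx i hi.2).1), (hx i hi.2).2⟩) ?_
  refine StrictMonoOn.injOn fun i hi j hj hij => ?_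
  exact (hx i hi.2).1.2.trans_le ((hu hij).trans (hx j hj.2).1.1.le)

-- One half of the Banach indicatrix theorem.
theorem eVariationOn_le_lintegral_encard_fiber [s.OrdConnected] (hf : ContinuousOn f s) :
    eVariationOn f s ≤ ∫⁻ c, {x ∈ s | f x = c}.encard := by
  classical
  have hmeas (a b : ℝ) : MeasurableSet (Set.uIoo a b) := measurableSet_Ioo
  refine iSup_le fun ⟨n, u, hu, hus⟩ => ?_
  calc ∑ i ∈ Finset.range n, edist (f (u (i + 1))) (f (u i))
      = ∑ i ∈ Finset.range n, ∫⁻ c, (Set.uIoo (f (u i)) (f (u (i + 1)))).indicator 1 c := by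
        refine Finset.sum_congr rfl fun i _ => ?_
        rw [lintegral_indicator_one (hmeas _ _), Real.volume_uIoo, edist_dist,
          Real.dist_eq]
    _ = ∫⁻ c, ∑ i ∈ Finset.range n, (Set.uIoo (f (u i)) (f (u (i + 1)))).indicator 1 c :=
        (lintegral_finsetSum _ fun i _ => measurable_one.indicator (hmeas _ _)).symm
    _ ≤ ∫⁻ c, {x ∈ s | f x = c}.encard := lintegral_mono fun c => by
        simp only [Set.indicator_apply, Pi.one_apply, Finset.sum_boole]
        exact_mod_cast card_crossings_le_encard_fiber hf hu hus n c

end Indicatrix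

lemma encard_roots_le_natDegree {P : ℝ[X][Y]} {c : ℝ} (hc : P.leadingCoeff.eval c ≠ 0) :
    {l | P.evalEval c l = 0}.encard ≤ P.natDegree := by
  have hne : P.map (evalRingHom c) ≠ 0 := by
    intro h0
    have := congrArg (coeff · P.natDegree) h0
    exact hc (by simpa [coeff_map] using this)
  calc {l | P.evalEval c l = 0}.encard ≤ ((P.map (evalRingHom c)).roots.toFinset : Set ℝ).encard :=
        Set.encard_le_encard fun l hl => by
          simpa [hne, ← map_evalRingHom_eval] using hl
    _ ≤ P.natDegree := by
        rw [Set.encard_coe_eq_coe_finsetCard]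
        exact_mod_cast (Multiset.toFinset_card_le _).trans ((card_roots' _).trans natDegree_map_le)

theorem boundedVariationOn_of_evalEval_eq_zero {f : ℝ → ℝ} {s : Set ℝ} [s.OrdConnected]
    (hf : ContinuousOn f s) {a b : ℝ} (hfs : Set.MapsTo f s (Set.Icc a b)) {P : ℝ[X][Y]}
    (hP : P ≠ 0) (hroot : ∀ l ∈ s, P.evalEval (f l) l = 0) : BoundedVariationOn f s := by
  have hlead : ∀ᵐ c : ℝ, P.leadingCoeff.eval c ≠ 0 := by
    have hfin := finite_setOfPred_isRoot (leadingCoeff_ne_zero.2 hP)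
    simpa only [ae_iff, not_not, IsRoot.def] using hfin.measure_zero volume
  have hfiber : ∀ᵐ c : ℝ, ({x ∈ s | f x = c}.encard : ℝ≥0∞) ≤
      (Set.Icc a b).indicator (fun _ => (P.natDegree : ℝ≥0∞)) c := by
    filter_upwards [hlead] with c hc
    by_cases hcab : c ∈ Set.Icc a b
    · have hle : {x ∈ s | f x = c}.encard ≤ P.natDegree :=
        (Set.encard_le_encard fun l hl => hl.2 ▸ hroot l hl.1).trans (encard_roots_le_natDegree hc)
      rw [Set.indicator_of_mem hcab]
      exact_mod_cast hle
    · have hempty : {x ∈ s | f x = c} = ∅ := Set.eq_empty_of_forall_notMem fun l hl =>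
        hcab (hl.2 ▸ hfs hl.1)
      simp [hempty]
  refine ne_top_of_le_ne_top ?_
    ((eVariationOn_le_lintegral_encard_fiber hf).trans (lintegral_mono_ae hfiber))
  rw [lintegral_indicator_const measurableSet_Icc, Real.volume_Icc]
  finiteness

lemma eVariationOn_pi_le_sum {α ι : Type*} [LinearOrder α] [Fintype ι] {E : ι → Type*}
    [∀ k, PseudoEMetricSpace (E k)] (f : α → ∀ k, E k) (s : Set α) :
    eVariationOn f s ≤ ∑ k, eVariationOn (fun a => f a k) s := by
  refine iSup_le fun ⟨n, u, hu, hus⟩ => ?_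
  calc ∑ i ∈ Finset.range n, edist (f (u (i + 1))) (f (u i))
      ≤ ∑ i ∈ Finset.range n, ∑ k, edist (f (u (i + 1)) k) (f (u i) k) :=
        Finset.sum_le_sum fun i _ => edist_pi_le_iff.2 fun k =>
          Finset.single_le_sum (f := fun k => edist (f (u (i + 1)) k) (f (u i) k))
            (fun _ _ => zero_le) (Finset.mem_univ k)
    _ = ∑ k, ∑ i ∈ Finset.range n, edist (f (u (i + 1)) k) (f (u i) k) := Finset.sum_comm
    _ ≤ ∑ k, eVariationOn (fun a => f a k) s :=
        Finset.sum_le_sum fun k _ => eVariationOn.sum_le (f := fun a => f a k) hu hus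

theorem boundedVariationOn_of_isDiscountedValue {K I J : Type*} [Fintype K] [Fintype I] [Fintype J]
    {q : K → I → J → K} {g : K → I → J → ℝ} (hg : ∀ x i j, g x i j ∈ Set.Icc (0 : ℝ) 1)
    {V : ℝ → K → ℝ} (hV : ∀ l ∈ Set.Ioc (0 : ℝ) 1, IsDiscountedValue q g l (V l)) :
    BoundedVariationOn V (Set.Ioc 0 1) := by
  refine ne_top_of_le_ne_top (ENNReal.sum_ne_top.2 fun k _ => ?_) (eVariationOn_pi_le_sum V _)
  obtain ⟨P, hP, hroot⟩ := exists_polynomial_evalEval_eq_zero q g k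
  exact boundedVariationOn_of_evalEval_eq_zero
    ((continuous_apply k).comp_continuousOn (continuousOn_of_isDiscountedValue hg hV))
    (fun l hl => (hV l hl).mem_Icc hg hl k) hP fun l hl => hroot l hl _ (hV l hl)

end BoundedVariation

/-! ### Discount schedules -/

section DiscountSchedules

variable {E : Type*} [PseudoMetricSpace E] {V : ℝ → E} {e : ℝ}

/-- A slowly decreasing summable sequence of discount factors along which the sequence `v` (in the
application, the vectors of discounted values) varies by a small fraction of the discount factor. -/
structure IsDiscountSchedule (e : ℝ) (lam : ℕ → ℝ) (v : ℕ → E) : Prop where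
  mem_Ioc (i : ℕ) : lam i ∈ Set.Ioc 0 1
  antitone : Antitone lam
  one_sub_mul_le (i : ℕ) : (1 - e) * lam i ≤ lam (i + 1)
  dist_le (i : ℕ) : dist (v (i + 1)) (v i) ≤ e * lam i
  summable : Summable lam

lemma sum_dist_le_eVariationOn {α : Type*} [LinearOrder α] {V : α → E} {s : Set α}
    (hV : BoundedVariationOn V s) {t : ℕ → α} (ht : Antitone t) (hts : ∀ i, t i ∈ s) (n : ℕ) :
    ∑ i ∈ Finset.range n, dist (V (t (i + 1))) (V (t i)) ≤ (eVariationOn V s).toReal := by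
  have hle : ∑ i ∈ Finset.range n, edist (V (t (i + 1))) (V (t i)) ≤ eVariationOn V s :=
    (eVariationOn.sum_le monotone_id fun i => Set.mem_univ i).trans
      (eVariationOn.comp_le_of_antitoneOn V t (ht.antitoneOn _) fun i _ => hts i)
  simp only [dist_edist]
  rw [← ENNReal.toReal_sum fun i _ => edist_ne_top _ _]
  exact ENNReal.toReal_mono hV hle

lemma exists_next_discount (hV : ContinuousOn V (Set.Ioc 0 1)) (he : e ∈ Set.Ioo 0 1) {a : ℝ}
    (ha : a ∈ Set.Ioc 0 1) : ∃ b ∈ Set.Ioc (0 : ℝ) 1, b ≤ a ∧ (1 - e) * a ≤ b ∧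
      dist (V b) (V a) ≤ e * a ∧ e * a ≤ (a - b) + dist (V b) (V a) := by
  have hle : (1 - e) * a ≤ a := mul_le_of_le_one_left ha.1.le (by linarith [he.1])
  have hsub : Set.Icc ((1 - e) * a) a ⊆ Set.Ioc 0 1 := fun y hy =>
    ⟨(mul_pos (by linarith [he.2]) ha.1).trans_le hy.1, hy.2.trans ha.2⟩
  rcases le_total (dist (V ((1 - e) * a)) (V a)) (e * a) with h | h
  · exact ⟨(1 - e) * a, hsub ⟨le_rfl, hle⟩, hle, le_rfl, h,
      by linarith [dist_nonneg (x := V ((1 - e) * a)) (y := V a)]⟩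
  · have hcont : ContinuousOn (fun b => dist (V b) (V a)) (Set.Icc ((1 - e) * a) a) :=
      (continuous_id.dist continuous_const).comp_continuousOn (hV.mono hsub)
    obtain ⟨b, hb, hbe⟩ := intermediate_value_Icc' hle hcont
      ⟨(dist_self (V a)).trans_le (mul_pos he.1 ha.1).le, h⟩
    replace hbe : dist (V b) (V a) = e * a := hbe
    exact ⟨b, hsub hb, hb.2, hb.1, hbe.le, by linarith [hb.2]⟩

theorem exists_isDiscountSchedule (hV : ContinuousOn V (Set.Ioc 0 1))
    (hbv : BoundedVariationOn V (Set.Ioc 0 1)) (he : e ∈ Set.Ioo 0 1) :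
    ∃ lam : ℕ → ℝ, IsDiscountSchedule e lam (V ∘ lam) := by
  choose! next hnext hnext_le hratio hdist hadvance using
    fun a (ha : a ∈ Set.Ioc 0 1) => exists_next_discount hV he ha
  let lam (i : ℕ) : ℝ := next^[i] 1
  have hsucc (i : ℕ) : lam (i + 1) = next (lam i) := Function.iterate_succ_apply' next i 1
  have hmem (i : ℕ) : lam i ∈ Set.Ioc 0 1 := by
    induction i with
    | zero => exact ⟨one_pos, le_rfl⟩
    | succ i ih => exact hsucc i ▸ hnext _ ih
  have hanti : Antitone lam := antitone_nat_of_succ_le fun i => hsucc i ▸ hnext_le _ (hmem i)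
  refine ⟨lam, hmem, hanti, fun i => hsucc i ▸ hratio _ (hmem i), fun i => ?_, ?_⟩
  · simpa only [Function.comp_apply, hsucc] using hdist _ (hmem i)
  refine summable_of_sum_range_le (c := (1 + (eVariationOn V (Set.Ioc 0 1)).toReal) / e)
    (fun i => (hmem i).1.le) fun n => ?_
  rw [le_div_iff₀' he.1, Finset.mul_sum]
  calc ∑ i ∈ Finset.range n, e * lam i
      ≤ ∑ i ∈ Finset.range n, (lam i - lam (i + 1) + dist (V (lam (i + 1))) (V (lam i))) :=
        Finset.sum_le_sum fun i _ => by simpa only [hsucc] using hadvance _ (hmem i)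
    _ = lam 0 - lam n + ∑ i ∈ Finset.range n, dist (V (lam (i + 1))) (V (lam i)) := by
        rw [Finset.sum_add_distrib, Finset.sum_range_sub']
    _ ≤ 1 + (eVariationOn V (Set.Ioc 0 1)).toReal := by
        have := sum_dist_le_eVariationOn hbv hanti hmem n
        linarith [(hmem n).1, (hmem 0).2]

end DiscountSchedules

section DiscountPotential

variable {E F : Type*} [PseudoMetricSpace E] [PseudoMetricSpace F] {lam : ℕ → ℝ} {u u' : ℝ}

/-- The integral of `lam ⌊s⌋₊` over `s ≥ u`. -/
def discountTail (lam : ℕ → ℝ) (u : ℝ) : ℝ :=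
  ∑' i, lam (i + ⌊u⌋₊) - (u - ⌊u⌋₊) * lam ⌊u⌋₊

lemma tsum_nat_add_eq_add (hlam : Summable lam) (n : ℕ) :
    ∑' i, lam (i + n) = lam n + ∑' i, lam (i + (n + 1)) := by
  rw [((summable_nat_add_iff n).2 hlam).tsum_eq_zero_add, zero_add]
  simp only [add_assoc, add_comm 1 n]

lemma discountTail_natCast (lam : ℕ → ℝ) (n : ℕ) : discountTail lam n = ∑' i, lam (i + n) := by
  simp [discountTail]

lemma discountTail_nonneg (h0 : ∀ i, 0 ≤ lam i) (hlam : Summable lam) (u : ℝ) :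
    0 ≤ discountTail lam u := by
  have hrest : 0 ≤ ∑' i, lam (i + (⌊u⌋₊ + 1)) := tsum_nonneg fun _ => h0 _
  have hfloor : 0 ≤ (⌊u⌋₊ + 1 - u) * lam ⌊u⌋₊ :=
    mul_nonneg (sub_nonneg.2 (Nat.lt_floor_add_one u).le) (h0 _)
  rw [discountTail, tsum_nat_add_eq_add hlam]
  linarith

lemma floor_eq_or_eq_add_one_or_add_one_eq (hu : 0 ≤ u) (hu' : 0 ≤ u') (h : |u' - u| ≤ 1) :
    ⌊u'⌋₊ = ⌊u⌋₊ ∨ ⌊u'⌋₊ = ⌊u⌋₊ + 1 ∨ ⌊u⌋₊ = ⌊u'⌋₊ + 1 := by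
  obtain ⟨hle, hle'⟩ := abs_sub_le_iff.1 h
  have h₁ : ⌊u'⌋₊ ≤ ⌊u⌋₊ + 1 :=
    (Nat.floor_le_floor (by linarith)).trans_eq (Nat.floor_add_one hu)
  have h₂ : ⌊u⌋₊ ≤ ⌊u'⌋₊ + 1 :=
    (Nat.floor_le_floor (by linarith)).trans_eq (Nat.floor_add_one hu')
  lia

lemma mul_sub_le_discountTail_sub_of_antitone (hanti : Antitone lam) (hlam : Summable lam)
    (hu : 0 ≤ u) (hu' : 0 ≤ u') (h : |u' - u| ≤ 1) :
    lam ⌊u'⌋₊ * (u' - u) ≤ discountTail lam u - discountTail lam u' := by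
  have hstep (k : ℕ) : 0 ≤ lam k - lam (k + 1) := sub_nonneg.2 (hanti k.le_succ)
  rcases floor_eq_or_eq_add_one_or_add_one_eq hu hu' h with hf | hf | hf
  · rw [discountTail, discountTail, hf]
    exact le_of_eq (by ring)
  · have := mul_nonneg (sub_nonneg.2 (Nat.lt_floor_add_one u).le) (hstep ⌊u⌋₊)
    rw [discountTail, discountTail, hf, tsum_nat_add_eq_add hlam ⌊u⌋₊]
    push_cast
    linarith
  · have := mul_nonneg (sub_nonneg.2 (hf ▸ Nat.floor_le hu : ((⌊u'⌋₊ + 1 : ℕ) : ℝ) ≤ u))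
      (hstep ⌊u'⌋₊)
    rw [discountTail, discountTail, hf, tsum_nat_add_eq_add hlam ⌊u'⌋₊]
    push_cast at this ⊢
    linarith

namespace IsDiscountSchedule

variable {e : ℝ} {v : ℕ → E}

lemma nonneg (h : IsDiscountSchedule e lam v) : 0 ≤ e :=
  nonneg_of_mul_nonneg_left (dist_nonneg.trans (h.dist_le 0)) (h.mem_Ioc 0).1

lemma dist_discount_le (h : IsDiscountSchedule e lam v) (i : ℕ) :
    dist (lam (i + 1)) (lam i) ≤ e * lam i := by
  rw [dist_comm, Real.dist_eq, abs_of_nonneg (sub_nonneg.2 (h.antitone i.le_succ))]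
  linarith [h.one_sub_mul_le i]

lemma dist_floor_le (h : IsDiscountSchedule e lam v) (he : e ≤ 1 / 2) {a : ℕ → F}
    (ha : ∀ i, dist (a (i + 1)) (a i) ≤ e * lam i) (hu : 0 ≤ u) (hu' : 0 ≤ u')
    (huu' : |u' - u| ≤ 1) : dist (a ⌊u'⌋₊) (a ⌊u⌋₊) ≤ 2 * e * lam ⌊u⌋₊ := by
  have hpos (k : ℕ) : 0 ≤ e * lam k := mul_nonneg h.nonneg (h.mem_Ioc k).1.le
  rcases floor_eq_or_eq_add_one_or_add_one_eq hu hu' huu' with hf | hf | hf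
  · rw [hf, dist_self]
    linarith [hpos ⌊u⌋₊]
  · rw [hf]
    linarith [ha ⌊u⌋₊, hpos ⌊u⌋₊]
  · have hhalf : lam ⌊u'⌋₊ ≤ 2 * lam (⌊u'⌋₊ + 1) := by
      linarith [h.one_sub_mul_le ⌊u'⌋₊, mul_le_mul_of_nonneg_right he (h.mem_Ioc ⌊u'⌋₊).1.le]
    rw [hf, dist_comm]
    linarith [ha ⌊u'⌋₊, mul_le_mul_of_nonneg_left hhalf h.nonneg]

lemma mul_sub_le_discountTail_sub (h : IsDiscountSchedule e lam v) (he : e ≤ 1 / 2) (hu : 0 ≤ u)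
    (hu' : 0 ≤ u') (huu' : |u' - u| ≤ 1) :
    lam ⌊u⌋₊ * (u' - u) - 2 * e * lam ⌊u⌋₊ ≤ discountTail lam u - discountTail lam u' := by
  have hdist : |lam ⌊u'⌋₊ - lam ⌊u⌋₊| * |u' - u| ≤ 2 * e * lam ⌊u⌋₊ :=
    (mul_le_of_le_one_right (abs_nonneg _) huu').trans
      (h.dist_floor_le he h.dist_discount_le hu hu' huu')
  rw [← abs_mul] at hdist
  linarith [neg_abs_le ((lam ⌊u'⌋₊ - lam ⌊u⌋₊) * (u' - u)),
    mul_sub_le_discountTail_sub_of_antitone h.antitone h.summable hu hu' huu']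

lemma sub_left {E : Type*} [SeminormedAddCommGroup E] {v : ℕ → E}
    (h : IsDiscountSchedule e lam v) (c : E) : IsDiscountSchedule e lam fun i => c - v i where
  mem_Ioc := h.mem_Ioc
  antitone := h.antitone
  one_sub_mul_le := h.one_sub_mul_le
  dist_le i := (dist_sub_left _ _ _).trans_le (h.dist_le i)
  summable := h.summable

end IsDiscountSchedule

end DiscountPotential

/-! ### Finite games -/

section AutomatonStrategies

variable {X I J : Type*} [Fintype I] [Fintype J] {q : X → I → J → X} {g : X → I → J → ℝ}

lemma exists_pmf_toReal_eq {p : I → ℝ} (hp : p ∈ stdSimplex ℝ I) :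
    ∃ μ : PMF I, ∀ i, (μ i).toReal = p i := by
  refine ⟨PMF.ofFintype (fun i => ENNReal.ofReal (p i)) ?_, fun i => ?_⟩
  · rw [← ENNReal.ofReal_sum_of_nonneg fun i _ => hp.1 i, hp.2, ENNReal.ofReal_one]
  · rw [PMF.ofFintype_apply, ENNReal.toReal_ofReal (hp.1 i)]

lemma toReal_mem_stdSimplex (μ : PMF I) : (fun i => (μ i).toReal) ∈ stdSimplex ℝ I := by
  refine ⟨fun i => ENNReal.toReal_nonneg, ?_⟩
  rw [← ENNReal.toReal_sum fun i _ => μ.apply_ne_top i, ← tsum_fintype (L := .unconditional I),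
    μ.tsum_coe, ENNReal.toReal_one]

lemma le_expPay_of_automaton {S : Type*} {pos : S → X} {step : S → I × J → S}
    (hpos : ∀ s i j, pos (step s (i, j)) = q (pos s) i j) {policy : S → PMF I} {B : ℕ → S → ℝ}
    (hB0 : ∀ s, B 0 s ≤ 0)
    (hB : ∀ n s j, B (n + 1) s ≤
      ∑ i, (policy s i).toReal * (g (pos s) i j + B n (step s (i, j))))
    (τ : List (I × J) → PMF J) (s₀ : S) (n : ℕ) :
    B n s₀ ≤ expPay q g (fun h => policy (h.foldl step s₀)) τ n (pos s₀) [] := by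
  suffices H : ∀ h, B n (h.foldl step s₀) ≤
      expPay q g (fun h => policy (h.foldl step s₀)) τ n (pos (h.foldl step s₀)) h from H []
  induction n with
  | zero => exact fun h => hB0 _
  | succ n ih =>
    intro h
    have hstep (i : I) (j : J) : (h ++ [(i, j)]).foldl step s₀ = step (h.foldl step s₀) (i, j) := by
      simp only [List.foldl_append, List.foldl_cons, List.foldl_nil]
    generalize hs : h.foldl step s₀ = s at hstep
    rw [expPay, Finset.sum_comm, hs]
    calc B (n + 1) s
        ≤ ∑ j, (τ h j).toReal *
            ∑ i, (policy s i).toReal * (g (pos s) i j + B n (step s (i, j))) :=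
          le_dotProduct_of_mem_stdSimplex (toReal_mem_stdSimplex (τ h)) (hB n s)
      _ ≤ _ := by
          refine Finset.sum_le_sum fun j _ => ?_
          rw [Finset.mul_sum]
          refine Finset.sum_le_sum fun i _ => ?_
          rw [← mul_assoc, mul_comm (τ h j).toReal]
          gcongr
          simpa only [hstep, hpos] using ih (h ++ [(i, j)])

end AutomatonStrategies

section MertensNeyman

open Matrix

variable {K I J : Type*} {q : K → I → J → K} {g : K → I → J → ℝ} {lam : ℕ → ℝ} {v : ℕ → K → ℝ}
  {e : ℝ} {M : ℕ}

/-- The counter of Mertens and Neyman, which selects the discount factor `lam ⌊u⌋₊` used at the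
current stage: it increases when the payoff exceeds the discounted value of the next state, and is
kept above `M`. The drift `6 * e` makes up for the changes of the discount factor. -/
def counterUpdate (q : K → I → J → K) (g : K → I → J → ℝ) (v : ℕ → K → ℝ) (e : ℝ) (M : ℕ)
    (x : K) (u : ℝ) (i : I) (j : J) : ℝ :=
  max M (u + (g x i j - v ⌊u⌋₊ (q x i j)) / 2 + 6 * e)

lemma natCast_le_counterUpdate (x : K) (u : ℝ) (i : I) (j : J) :
    (M : ℝ) ≤ counterUpdate q g v e M x u i j := le_max_left _ _

lemma add_le_counterUpdate (x : K) (u : ℝ) (i : I) (j : J) :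
    u + (g x i j - v ⌊u⌋₊ (q x i j)) / 2 + 6 * e ≤ counterUpdate q g v e M x u i j :=
  le_max_right _ _

/-- The submartingale of Mertens and Neyman: the current discounted value, corrected by the mass
of the discount factors still to come. -/
def discountPotential (lam : ℕ → ℝ) (v : ℕ → K → ℝ) (x : K) (u : ℝ) : ℝ :=
  v ⌊u⌋₊ x - 2 * discountTail lam u

/-- The lower bound on the payoff of the next `n` stages that the strategy of Mertens and Neyman
maintains. -/
def payoffBound (lam : ℕ → ℝ) (v : ℕ → K → ℝ) (e : ℝ) (M n : ℕ) (x : K) (u : ℝ) : ℝ :=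
  n * (discountPotential lam v x u - 14 * e) -
    1 / (3 * e * lam M) * (1 - discountPotential lam v x u) - 2 * (u - M)

variable [Fintype K] [Fintype I] [Fintype J]

lemma abs_counterUpdate_sub_le (hg : ∀ x i j, g x i j ∈ Set.Icc (0 : ℝ) 1)
    (hlam : IsDiscountSchedule e lam v) (hv : ∀ i, IsDiscountedValue q g (lam i) (v i))
    (he : e ≤ 1 / 12) (x : K) {u : ℝ} (hu : M ≤ u) (i : I) (j : J) :
    |counterUpdate q g v e M x u i j - u| ≤ 1 := by
  obtain ⟨hg0, hg1⟩ := hg x i j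
  obtain ⟨hv0, hv1⟩ := (hv ⌊u⌋₊).mem_Icc hg (hlam.mem_Ioc _) (q x i j)
  have hge : _ ≤ counterUpdate q g v e M x u i j := add_le_counterUpdate x u i j
  have hle : counterUpdate q g v e M x u i j ≤ u + 1 := max_le (by linarith) (by linarith)
  exact abs_sub_le_iff.2 ⟨by linarith, by linarith [hlam.nonneg]⟩

lemma dist_value_counterUpdate_le (hg : ∀ x i j, g x i j ∈ Set.Icc (0 : ℝ) 1)
    (hlam : IsDiscountSchedule e lam v) (hv : ∀ i, IsDiscountedValue q g (lam i) (v i))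
    (he : e ≤ 1 / 12) (x : K) {u : ℝ} (hu : M ≤ u) (i : I) (j : J) (y : K) :
    |v ⌊counterUpdate q g v e M x u i j⌋₊ y - v ⌊u⌋₊ y| ≤ 2 * e * lam ⌊u⌋₊ :=
  (dist_le_pi_dist _ _ y).trans <| hlam.dist_floor_le (by linarith) hlam.dist_le
    (M.cast_nonneg.trans hu) (M.cast_nonneg.trans (natCast_le_counterUpdate x u i j))
    (abs_counterUpdate_sub_le hg hlam hv he x hu i j)

lemma discountPotential_le_value (hlam : IsDiscountSchedule e lam v) (x : K) (u : ℝ) :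
    discountPotential lam v x u ≤ v ⌊u⌋₊ x := by
  have := discountTail_nonneg (fun i => (hlam.mem_Ioc i).1.le) hlam.summable u
  rw [discountPotential]
  linarith

lemma discountPotential_add_le (hg : ∀ x i j, g x i j ∈ Set.Icc (0 : ℝ) 1)
    (hlam : IsDiscountSchedule e lam v) (hv : ∀ i, IsDiscountedValue q g (lam i) (v i))
    (he : e ≤ 1 / 12) (x : K) {u : ℝ} (hu : M ≤ u) (i : I) (j : J) :
    discountPotential lam v x u + (shapleyMatrix q g (lam ⌊u⌋₊) (v ⌊u⌋₊) x i j - v ⌊u⌋₊ x) +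
        6 * e * lam ⌊u⌋₊ ≤
      discountPotential lam v (q x i j) (counterUpdate q g v e M x u i j) := by
  set u' := counterUpdate q g v e M x u i j
  have hge : _ ≤ u' := add_le_counterUpdate x u i j
  have htail := hlam.mul_sub_le_discountTail_sub (by linarith) (M.cast_nonneg.trans hu)
    (M.cast_nonneg.trans (natCast_le_counterUpdate x u i j))
    (abs_counterUpdate_sub_le hg hlam hv he x hu i j)
  have hvalue := abs_le.1 (dist_value_counterUpdate_le hg hlam hv he x hu i j (q x i j))
  have hcounter : lam ⌊u⌋₊ * ((g x i j - v ⌊u⌋₊ (q x i j)) / 2 + 6 * e) ≤ lam ⌊u⌋₊ * (u' - u) :=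
    mul_le_mul_of_nonneg_left (by linarith) (hlam.mem_Ioc _).1.le
  rw [discountPotential, discountPotential, shapleyMatrix_apply]
  linarith [hvalue.1]

lemma discountPotential_counterUpdate_le (hg : ∀ x i j, g x i j ∈ Set.Icc (0 : ℝ) 1)
    (hlam : IsDiscountSchedule e lam v) (hv : ∀ i, IsDiscountedValue q g (lam i) (v i))
    (he : e ≤ 1 / 12) (x : K) {u : ℝ} (hu : M ≤ u) (i : I) (j : J) :
    discountPotential lam v (q x i j) (counterUpdate q g v e M x u i j) +
        2 * (counterUpdate q g v e M x u i j - u) ≤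
      g x i j + 14 * e + 2 * lam ⌊u⌋₊ / lam M := by
  have hpot := discountPotential_le_value hlam (q x i j) (counterUpdate q g v e M x u i j)
  rcases le_total (M : ℝ) (u + (g x i j - v ⌊u⌋₊ (q x i j)) / 2 + 6 * e) with hM | hM
  · have hcounter : counterUpdate q g v e M x u i j = _ := max_eq_right hM
    have hvalue := abs_le.1 (dist_value_counterUpdate_le hg hlam hv he x hu i j (q x i j))
    have hsmall : e * lam ⌊u⌋₊ ≤ e := mul_le_of_le_one_right hlam.nonneg (hlam.mem_Ioc _).2
    have : 0 ≤ 2 * lam ⌊u⌋₊ / lam M :=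
      div_nonneg (mul_nonneg zero_le_two (hlam.mem_Ioc _).1.le) (hlam.mem_Ioc _).1.le
    linarith [hvalue.2]
  · have hcounter : counterUpdate q g v e M x u i j = M := max_eq_left hM
    have hu' := abs_counterUpdate_sub_le (M := M) hg hlam hv he x hu i j
    have hone : 1 ≤ 2 * lam ⌊u⌋₊ / lam M := by
      have hadj := (le_abs_self _).trans (hlam.dist_floor_le (by linarith) hlam.dist_discount_le
        (M.cast_nonneg.trans hu) M.cast_nonneg (hcounter ▸ hu'))
      rw [Nat.floor_natCast] at hadj
      rw [one_le_div (hlam.mem_Ioc M).1]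
      linarith [mul_le_mul_of_nonneg_right he (hlam.mem_Ioc ⌊u⌋₊).1.le, (hlam.mem_Ioc ⌊u⌋₊).1]
    rw [hcounter] at hpot ⊢
    linarith [((hv ⌊(M : ℝ)⌋₊).mem_Icc hg (hlam.mem_Ioc _) (q x i j)).2, (hg x i j).1, hlam.nonneg]

lemma payoffBound_add_le (hg : ∀ x i j, g x i j ∈ Set.Icc (0 : ℝ) 1)
    (hlam : IsDiscountSchedule e lam v) (hv : ∀ i, IsDiscountedValue q g (lam i) (v i))
    (he : e ∈ Set.Ioc 0 (1 / 12)) (n : ℕ) (x : K) {u : ℝ} (hu : M ≤ u) (i : I) (j : J) :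
    payoffBound lam v e M (n + 1) x u + (n + 1 + 1 / (3 * e * lam M)) *
        (shapleyMatrix q g (lam ⌊u⌋₊) (v ⌊u⌋₊) x i j - v ⌊u⌋₊ x) ≤
      g x i j + payoffBound lam v e M n (q x i j) (counterUpdate q g v e M x u i j) := by
  have hlamM := (hlam.mem_Ioc M).1
  have hlamu := (hlam.mem_Ioc ⌊u⌋₊).1
  have he0 := he.1
  have hweight : 1 / (3 * e * lam M) * (6 * e * lam ⌊u⌋₊) = 2 * lam ⌊u⌋₊ / lam M := by
    field_simp
    norm_num
  have hdrift := mul_le_mul_of_nonneg_left (discountPotential_add_le hg hlam hv he.2 x hu i j)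
    (by positivity : 0 ≤ n + 1 + 1 / (3 * e * lam M))
  have hpay := discountPotential_counterUpdate_le hg hlam hv he.2 x hu i j
  have : 0 ≤ (n + 1) * (6 * e * lam ⌊u⌋₊) := by positivity
  rw [payoffBound, payoffBound]
  push_cast
  linarith

lemma payoffBound_zero_nonpos (hg : ∀ x i j, g x i j ∈ Set.Icc (0 : ℝ) 1)
    (hlam : IsDiscountSchedule e lam v) (hv : ∀ i, IsDiscountedValue q g (lam i) (v i))
    (x : K) {u : ℝ} (hu : M ≤ u) : payoffBound lam v e M 0 x u ≤ 0 := by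
  have hY : discountPotential lam v x u ≤ 1 := (discountPotential_le_value hlam x u).trans
    ((hv _).mem_Icc hg (hlam.mem_Ioc _) x).2
  have hA : 0 ≤ 1 / (3 * e * lam M) * (1 - discountPotential lam v x u) :=
    mul_nonneg (one_div_nonneg.2 (mul_nonneg (mul_nonneg zero_le_three hlam.nonneg)
      (hlam.mem_Ioc M).1.le)) (sub_nonneg.2 hY)
  rw [payoffBound]
  push_cast
  linarith

theorem exists_payoffBound_le_expPay (hg : ∀ x i j, g x i j ∈ Set.Icc (0 : ℝ) 1)
    (hlam : IsDiscountSchedule e lam v) (hv : ∀ i, IsDiscountedValue q g (lam i) (v i))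
    (he : e ∈ Set.Ioc 0 (1 / 12)) (M : ℕ) (x₁ : K) :
    ∃ σ : List (I × J) → PMF I, ∀ (τ : List (I × J) → PMF J) (n : ℕ),
      payoffBound lam v e M n x₁ M ≤ expPay q g σ τ n x₁ [] := by
  choose p hp hpv using fun n x => (hv n x).1
  choose μ hμ using fun n x => exists_pmf_toReal_eq (hp n x)
  let step (s : K × Set.Ici (M : ℝ)) (a : I × J) : K × Set.Ici (M : ℝ) :=
    (q s.1 a.1 a.2, ⟨counterUpdate q g v e M s.1 s.2 a.1 a.2, natCast_le_counterUpdate _ _ _ _⟩)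
  let policy (s : K × Set.Ici (M : ℝ)) : PMF I := μ ⌊(s.2 : ℝ)⌋₊ s.1
  refine ⟨fun h => policy (h.foldl step (x₁, ⟨M, Set.self_mem_Ici⟩)), fun τ n =>
    le_expPay_of_automaton (pos := Prod.fst) (step := step) (policy := policy)
    (B := fun n s => payoffBound lam v e M n s.1 s.2)
    (fun _ _ _ => rfl) (fun s => payoffBound_zero_nonpos hg hlam hv s.1 s.2.2)
    (fun n s j => ?_) τ (x₁, ⟨M, Set.self_mem_Ici⟩) n⟩
  obtain ⟨x, u, hu⟩ := s
  have hlamM := (hlam.mem_Ioc M).1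
  have he0 := he.1
  set c : ℝ := n + 1 + 1 / (3 * e * lam M)
  have hadv : 0 ≤ c * ((p ⌊u⌋₊ x ᵥ* shapleyMatrix q g (lam ⌊u⌋₊) (v ⌊u⌋₊) x) j - v ⌊u⌋₊ x) :=
    mul_nonneg (by positivity) (sub_nonneg.2 (hpv _ x j))
  simp only [policy, hμ]
  calc payoffBound lam v e M (n + 1) x u
      ≤ payoffBound lam v e M (n + 1) x u +
          c * ((p ⌊u⌋₊ x ᵥ* shapleyMatrix q g (lam ⌊u⌋₊) (v ⌊u⌋₊) x) j - v ⌊u⌋₊ x) := by linarith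
    _ = ∑ i, p ⌊u⌋₊ x i * (payoffBound lam v e M (n + 1) x u +
          c * (shapleyMatrix q g (lam ⌊u⌋₊) (v ⌊u⌋₊) x i j - v ⌊u⌋₊ x)) := by
        simp only [mul_add, mul_sub, Finset.sum_add_distrib, Finset.sum_sub_distrib,
          ← Finset.sum_mul, (hp ⌊u⌋₊ x).2, one_mul, mul_left_comm _ c, ← Finset.mul_sum]
        rfl
    _ ≤ _ := Finset.sum_le_sum fun i _ =>
        mul_le_mul_of_nonneg_left (payoffBound_add_le hg hlam hv he n x hu i j) ((hp ⌊u⌋₊ x).1 i)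

end MertensNeyman

section Securing

variable {X I J : Type*} [Fintype I] [Fintype J] {q : X → I → J → X} {g : X → I → J → ℝ} {x : X}
  {c d : ℝ}

/-- Player 1 has a strategy that makes the average payoff at least `c` in every long enough game. -/
def Secures1 (q : X → I → J → X) (g : X → I → J → ℝ) (x : X) (c : ℝ) : Prop :=
  ∃ (σ : List (I × J) → PMF I) (N : ℕ), ∀ τ : List (I × J) → PMF J, ∀ n ≥ N,
    c ≤ gamePayoff q g σ τ x n

/-- Player 2 has a strategy that makes the average payoff at most `c` in every long enough game. -/
def Secures2 (q : X → I → J → X) (g : X → I → J → ℝ) (x : X) (c : ℝ) : Prop :=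
  ∃ (τ : List (I × J) → PMF J) (N : ℕ), ∀ σ : List (I × J) → PMF I, ∀ n ≥ N,
    gamePayoff q g σ τ x n ≤ c

lemma Secures1.mono (h : Secures1 q g x c) (hdc : d ≤ c) : Secures1 q g x d := by
  obtain ⟨σ, N, hσ⟩ := h
  exact ⟨σ, N, fun τ n hn => hdc.trans (hσ τ n hn)⟩

lemma Secures2.mono (h : Secures2 q g x c) (hcd : c ≤ d) : Secures2 q g x d := by
  obtain ⟨τ, N, hτ⟩ := h
  exact ⟨τ, N, fun σ n hn => (hτ σ n hn).trans hcd⟩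

lemma Secures1.le_of_secures2 (hc : Secures1 q g x c) (hd : Secures2 q g x d) : c ≤ d := by
  obtain ⟨σ, N, hσ⟩ := hc
  obtain ⟨τ, N', hτ⟩ := hd
  exact (hσ τ _ (le_max_left N N')).trans (hτ σ _ (le_max_right N N'))

theorem exists_guarantees_of_forall_secures
    (h : ∀ ε > 0, ∃ w, Secures1 q g x (w - ε) ∧ Secures2 q g x (w + ε)) :
    ∃ v, Guarantees1 q g x v ∧ Guarantees2 q g x v := by
  obtain ⟨w₁, hw₁, hw₁'⟩ := h 1 one_pos
  have hne : {c | Secures1 q g x c}.Nonempty := ⟨_, hw₁⟩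
  have hbdd : BddAbove {c | Secures1 q g x c} := ⟨_, fun c hc => hc.le_of_secures2 hw₁'⟩
  refine ⟨sSup {c | Secures1 q g x c}, fun ε hε => ?_, fun ε hε => ?_⟩
  · obtain ⟨c, hc, hlt⟩ := exists_lt_of_lt_csSup hne (sub_lt_self _ hε)
    exact Secures1.mono hc hlt.le
  · obtain ⟨w, hw, hw'⟩ := h (ε / 2) (half_pos hε)
    exact hw'.mono (by linarith [le_csSup hbdd hw])

lemma expPay_swap (q : X → I → J → X) (g : X → I → J → ℝ) (σ : List (I × J) → PMF I)
    (τ : List (J × I) → PMF J) (n : ℕ) (x : X) (h : List (I × J)) :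
    expPay (fun x j i => q x i j) (fun x j i => 1 - g x i j) τ (fun h => σ (h.map Prod.swap)) n x
        (h.map Prod.swap) =
      n - expPay q g σ (fun h => τ (h.map Prod.swap)) n x h := by
  induction n generalizing x h with
  | zero => simp only [expPay, Nat.cast_zero, sub_zero]
  | succ n ih =>
    have hh : (h.map Prod.swap).map Prod.swap = h := by
      rw [List.map_map, Prod.swap_swap_eq, List.map_id]
    have happend (i : I) (j : J) :
        h.map Prod.swap ++ [(j, i)] = (h ++ [(i, j)]).map Prod.swap := by
      rw [List.map_append, List.map_singleton, Prod.swap_prod_mk]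
    have htotal : ∑ i, ∑ j, (σ h i).toReal * (τ (h.map Prod.swap) j).toReal * ((n : ℝ) + 1) =
        n + 1 := by
      simp only [← Finset.sum_mul, ← Finset.mul_sum, (toReal_mem_stdSimplex _).2, mul_one,
        one_mul]
    rw [expPay, expPay, Finset.sum_comm, Nat.cast_succ, ← htotal, ← Finset.sum_sub_distrib]
    refine Finset.sum_congr rfl fun i _ => ?_
    rw [← Finset.sum_sub_distrib]
    refine Finset.sum_congr rfl fun j _ => ?_
    rw [hh, happend, ih]
    ring

lemma secures2_of_swap (h : Secures1 (fun x j i => q x i j) (fun x j i => 1 - g x i j) x (1 - c)) :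
    Secures2 q g x c := by
  obtain ⟨τ, N, hτ⟩ := h
  refine ⟨fun h => τ (h.map Prod.swap), N + 1, fun σ n hn => ?_⟩
  have hpay := hτ (fun h => σ (h.map Prod.swap)) n (Nat.le_of_succ_le hn)
  have hn0 : (n : ℝ) ≠ 0 := Nat.cast_ne_zero.2 (Nat.ne_zero_of_lt hn)
  rw [gamePayoff, ← List.map_nil (f := Prod.swap), expPay_swap, mul_sub,
    one_div_mul_cancel hn0] at hpay
  rw [gamePayoff]
  linarith

end Securing

section FiniteGame

variable {K I J : Type*} [Fintype I] [Fintype J] {q : K → I → J → K} {g : K → I → J → ℝ}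

lemma IsDiscountSchedule.secures1 [Fintype K] {lam : ℕ → ℝ} {v : ℕ → K → ℝ} {e : ℝ} {M : ℕ}
    (hg : ∀ x i j, g x i j ∈ Set.Icc (0 : ℝ) 1)
    (hlam : IsDiscountSchedule e lam v) (hv : ∀ i, IsDiscountedValue q g (lam i) (v i))
    (he : e ∈ Set.Ioc 0 (1 / 12)) (hM : ∑' i, lam (i + M) ≤ e) (x : K) :
    Secures1 q g x (v M x - 17 * e) := by
  obtain ⟨σ, hσ⟩ := exists_payoffBound_le_expPay hg hlam hv he M x
  obtain ⟨N, hN⟩ := exists_nat_ge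
    (1 / (3 * e * lam M) * (1 - discountPotential lam v x M) / e)
  refine ⟨σ, N + 1, fun τ n hn => ?_⟩
  have hn0 : (0 : ℝ) < n := Nat.cast_pos.2 (Nat.zero_lt_of_lt hn)
  have hNn : (N : ℝ) ≤ n := Nat.cast_le.2 (Nat.le_of_succ_le hn)
  have hpot : v M x - 2 * e ≤ discountPotential lam v x M := by
    rw [discountPotential, discountTail_natCast, Nat.floor_natCast]
    linarith
  have hlong := (div_le_iff₀ he.1).1 (hN.trans hNn)
  have hpay := hσ τ n
  rw [payoffBound, sub_self, mul_zero, sub_zero] at hpay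
  rw [gamePayoff, one_div, ← div_eq_inv_mul, le_div_iff₀' hn0]
  linarith [mul_le_mul_of_nonneg_left hpot hn0.le]

theorem exists_secures_of_finite [Finite K] [Nonempty I] [Nonempty J]
    (hg : ∀ x i j, g x i j ∈ Set.Icc (0 : ℝ) 1) (x : K) {ε : ℝ} (hε : 0 < ε) :
    ∃ w, Secures1 q g x (w - ε) ∧ Secures2 q g x (w + ε) := by
  have := Fintype.ofFinite K
  choose! V hV using fun l (hl : l ∈ Set.Ioc (0 : ℝ) 1) => exists_isDiscountedValue q g hl
  obtain ⟨e, he0, he⟩ : ∃ e > 0, e < min (1 / 12) (ε / 17) := exists_between (by positivity)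
  obtain ⟨he12, heε⟩ := lt_min_iff.1 he
  obtain ⟨lam, hlam⟩ := exists_isDiscountSchedule (continuousOn_of_isDiscountedValue hg hV)
    (boundedVariationOn_of_isDiscountedValue hg hV) (e := e) ⟨he0, by linarith⟩
  have hv (i : ℕ) : IsDiscountedValue q g (lam i) ((V ∘ lam) i) := hV _ (hlam.mem_Ioc i)
  obtain ⟨M, hM⟩ : ∃ M, ∑' i, lam (i + M) ≤ e :=
    ((tendsto_sum_nat_add lam).eventually (eventually_le_nhds he0)).exists
  refine ⟨V (lam M) x, (hlam.secures1 hg hv ⟨he0, he12.le⟩ hM x).mono ?_, secures2_of_swap ?_⟩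
  · change _ ≤ V (lam M) x - _
    linarith
  · have hg' (x : K) (j : J) (i : I) : 1 - g x i j ∈ Set.Icc (0 : ℝ) 1 :=
      ⟨sub_nonneg.2 (hg x i j).2, sub_le_self _ (hg x i j).1⟩
    refine ((hlam.sub_left 1).secures1 hg' (fun i => (hv i).swap) ⟨he0, he12.le⟩ hM x).mono ?_
    change _ ≤ 1 - V (lam M) x - _
    linarith

end FiniteGame

/-! ### Nonexpansive maps for polyhedral distances -/

section PolyhedralDistance

/-- The distance of `X` is the support function of a finite set: it is the greatest of the
increments of finitely many functions. Finite-dimensional norms with a polyhedral unit ball, such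
as the `ℓ¹` norm, have this property. -/
def HasPolyhedralDist (X : Type*) [PseudoMetricSpace X] : Prop :=
  ∃ Φ : Set (X → ℝ), Φ.Finite ∧
    ∀ x y, IsGreatest ((fun φ : X → ℝ => φ y - φ x) '' Φ) (dist x y)

lemma HasPolyhedralDist.subtype {X : Type*} [PseudoMetricSpace X] (hX : HasPolyhedralDist X)
    (s : Set X) : HasPolyhedralDist s := by
  obtain ⟨Φ, hfin, hΦ⟩ := hX
  refine ⟨(fun φ x => φ x) '' Φ, hfin.image _, fun x y => ?_⟩
  rw [Set.image_image]
  exact hΦ x y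

lemma hasPolyhedralDist_piLp_one (ι : Type*) [Fintype ι] :
    HasPolyhedralDist (PiLp 1 fun _ : ι => ℝ) := by
  refine ⟨Set.range fun (s : ι → SignType) x => ∑ i, (s i : ℝ) * x i, Set.finite_range _,
    fun x y => ?_⟩
  simp only [PiLp.dist_eq_of_L1, Real.dist_eq]
  constructor
  · refine ⟨_, ⟨fun i => SignType.sign (y i - x i), rfl⟩, ?_⟩
    simp only [← Finset.sum_sub_distrib, ← mul_sub, sign_mul_self, abs_sub_comm (x _)]
  · rintro _ ⟨_, ⟨s, rfl⟩, rfl⟩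
    simp only [← Finset.sum_sub_distrib, ← mul_sub]
    refine Finset.sum_le_sum fun i _ => (le_abs_self _).trans ?_
    rw [abs_mul, abs_sub_comm (x i)]
    refine mul_le_of_le_one_left (abs_nonneg _) ?_
    cases s i <;> simp

end PolyhedralDistance

section Orbits

variable {X : Type*} [PseudoMetricSpace X] {f : X → X}

lemma dist_iterate_le (hf : LipschitzWith 1 f) (n : ℕ) (x y : X) :
    dist (f^[n] x) (f^[n] y) ≤ dist x y := by
  simpa using (hf.iterate n).dist_le_mul x y

lemma mapClusterPt_atTop_iff_exists_dist_lt {u : ℕ → X} {y : X} :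
    MapClusterPt y atTop u ↔ ∀ ε > 0, ∀ N, ∃ n ≥ N, dist (u n) y < ε := by
  simp only [Metric.nhds_basis_ball.mapClusterPt_iff_frequently, frequently_atTop, Metric.mem_ball]

/-- Every orbit of `f` accumulates at every point. -/
def IsMinimalMap (f : X → X) : Prop :=
  ∀ x y, MapClusterPt y atTop fun n => f^[n] x

-- If `f^[n] x` is close to `x` and `f^[j] x` to `y`, then `f^[n] y` is close to
-- `f^[n] (f^[j] x) = f^[j] (f^[n] x)`, hence to `y`: no distance can have decreased.
lemma isometry_of_isMinimalMap (hf : LipschitzWith 1 f) (hmin : IsMinimalMap f) : Isometry f := by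
  refine Isometry.of_dist_eq fun x y => le_antisymm (dist_iterate_le hf 1 x y) ?_
  refine le_of_forall_pos_le_add fun ε hε => ?_
  obtain ⟨_ | n, hn, hnx⟩ := mapClusterPt_atTop_iff_exists_dist_lt.1 (hmin x x) (ε / 4)
    (by linarith) 1
  · simp at hn
  obtain ⟨j, -, hjy⟩ := mapClusterPt_atTop_iff_exists_dist_lt.1 (hmin x y) (ε / 4)
    (by linarith) 0
  have hny : dist y (f^[n + 1] y) ≤ 3 * (ε / 4) := by
    have hcomm : f^[n + 1] (f^[j] x) = f^[j] (f^[n + 1] x) :=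
      (Function.Commute.refl f).iterate_iterate _ _ x
    have hyn := dist_iterate_le hf (n + 1) (f^[j] x) y
    have hxj := dist_iterate_le hf j (f^[n + 1] x) x
    rw [hcomm] at hyn
    have htri := dist_triangle4 y (f^[j] x) (f^[j] (f^[n + 1] x)) (f^[n + 1] y)
    rw [dist_comm y (f^[j] x), dist_comm (f^[j] x) (f^[j] _)] at htri
    linarith
  have hfn := dist_iterate_le hf n (f x) (f y)
  have htri := dist_triangle4 x (f^[n + 1] x) (f^[n + 1] y) y
  rw [dist_comm x (f^[n + 1] x), dist_comm (f^[n + 1] y)] at htri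
  simp only [Function.iterate_succ_apply] at hnx hny htri
  linarith

variable (f) in
/-- The limit points of the orbit of `x` under `f`. -/
def orbitLimitSet (x : X) : Set X :=
  omegaLimit atTop (fun n => f^[n]) {x}

lemma mem_orbitLimitSet {x y : X} :
    y ∈ orbitLimitSet f x ↔ ∀ ε > 0, ∀ N, ∃ n ≥ N, dist (f^[n] x) y < ε :=
  (mem_omegaLimit_singleton_iff_mapClusterPt ..).trans mapClusterPt_atTop_iff_exists_dist_lt

lemma mapsTo_orbitLimitSet (hf : LipschitzWith 1 f) (x : X) :
    Set.MapsTo f (orbitLimitSet f x) (orbitLimitSet f x) := by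
  intro y hy
  refine mem_orbitLimitSet.2 fun ε hε N => ?_
  obtain ⟨n, hn, hny⟩ := mem_orbitLimitSet.1 hy ε hε N
  refine ⟨n + 1, by omega, ?_⟩
  rw [Function.iterate_succ_apply']
  exact (dist_iterate_le hf 1 _ _).trans_lt hny

lemma isMinimalMap_restrict_orbitLimitSet (hf : LipschitzWith 1 f) (x : X) :
    IsMinimalMap (mapsTo_orbitLimitSet hf x).restrict := by
  rintro ⟨y, hy⟩ ⟨z, hz⟩
  refine mapClusterPt_atTop_iff_exists_dist_lt.2 fun ε hε N => ?_
  obtain ⟨n, -, hny⟩ := mem_orbitLimitSet.1 hy (ε / 2) (half_pos hε) 0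
  obtain ⟨m, hm, hmz⟩ := mem_orbitLimitSet.1 hz (ε / 2) (half_pos hε) (n + N)
  refine ⟨m - n, by omega, ?_⟩
  rw [Subtype.dist_eq, Set.MapsTo.coe_iterate_restrict]
  have hnm := dist_iterate_le hf (m - n) y (f^[n] x)
  rw [← Function.iterate_add_apply, Nat.sub_add_cancel (by omega), dist_comm y] at hnm
  linarith [dist_triangle (f^[m - n] y) (f^[m] x) z]

end Orbits

section Translations

variable {Ω : Type*} [MetricSpace Ω] {F u h : Ω → Ω}

/-- The translations of a minimal isometry `F`. They act transitively when the space is compact. -/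
def IsTranslation (F u : Ω → Ω) : Prop :=
  Isometry u ∧ Function.Commute u F

/-- A translation `h` such that moving by `h` never continues a geodesic started by another
translation. -/
def IsExtremalTranslation (F h : Ω → Ω) : Prop :=
  IsTranslation F h ∧ ∀ u, IsTranslation F u → ∀ x, 0 < dist x (u x) →
    dist x (h (u x)) < dist x (h x) + dist x (u x)

lemma IsTranslation.comp (hh : IsTranslation F h) (hu : IsTranslation F u) :
    IsTranslation F (h ∘ u) :=
  ⟨hh.1.comp hu.1, hh.2.comp_left hu.2⟩

lemma isometry_iterate (hF : Isometry F) (n : ℕ) : Isometry F^[n] := by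
  induction n with
  | zero => exact isometry_id
  | succ n ih => exact ih.comp hF

lemma IsTranslation.dist_eq (hF : Isometry F) (hmin : IsMinimalMap F) (hu : IsTranslation F u)
    (x y : Ω) : dist x (u x) = dist y (u y) := by
  obtain ⟨U, -, hU⟩ := mapClusterPt_iff_ultrafilter.1 (hmin x y)
  refine tendsto_nhds_unique ?_ (hU.dist ((hu.1.continuous.tendsto y).comp hU))
  simp only [Function.comp_apply, (hu.2.iterate_right _).eq, (isometry_iterate hF _).dist_eq]
  exact tendsto_const_nhds

-- `u` is a limit of iterates of `F` along an ultrafilter.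
lemma exists_isTranslation_apply_eq [CompactSpace Ω] (hF : Isometry F) (hmin : IsMinimalMap F)
    (x y : Ω) : ∃ u, IsTranslation F u ∧ u x = y := by
  obtain ⟨U, -, hU⟩ := mapClusterPt_iff_ultrafilter.1 (hmin x y)
  choose u hu using fun z => (⟨_, (U.map (F^[·] z)).le_nhds_lim⟩ :
    ∃ w, Tendsto (F^[·] z) U (𝓝 w))
  refine ⟨u, ⟨Isometry.of_dist_eq fun a b => ?_, fun z => ?_⟩, tendsto_nhds_unique (hu x) hU⟩
  · refine tendsto_nhds_unique ((hu a).dist (hu b)) ?_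
    simp only [(isometry_iterate hF _).dist_eq]
    exact tendsto_const_nhds
  · have hlim := (hF.continuous.tendsto _).comp (hu z)
    refine tendsto_nhds_unique (hu (F z)) (hlim.congr fun n => ?_)
    simp only [Function.comp_apply, ← Function.iterate_succ_apply', Function.iterate_succ_apply]

-- `h x` is a furthest point from `x` among the ends of the geodesics from `x` through `y`.
lemma exists_isExtremalTranslation [CompactSpace Ω] (hF : Isometry F) (hmin : IsMinimalMap F)
    (x y : Ω) : ∃ h, IsExtremalTranslation F h ∧ dist x (h x) = dist x y + dist y (h x) := by
  have hclosed : IsClosed {z | dist x z = dist x y + dist y z} :=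
    isClosed_eq (by fun_prop) (by fun_prop)
  obtain ⟨z, hz, hmax⟩ := hclosed.isCompact.exists_isMaxOn ⟨y, by simp⟩
    (f := fun z => dist x z) (by fun_prop)
  obtain ⟨h, hh, rfl⟩ := exists_isTranslation_apply_eq hF hmin x z
  refine ⟨h, ⟨hh, fun u hu w hw => ?_⟩, hz⟩
  have hhu := (hh.comp hu).dist_eq hF hmin w x
  simp only [Function.comp_apply] at hhu
  rw [hhu, hh.dist_eq hF hmin w x]
  rw [hu.dist_eq hF hmin w x] at hw ⊢
  by_contra! hcon
  have hiso : dist (h x) (h (u x)) = dist x (u x) := hh.1.dist_eq _ _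
  have hxy : dist x (h x) = dist x y + dist y (h x) := hz
  have hmem : dist x (h (u x)) = dist x y + dist y (h (u x)) := by
    linarith [dist_triangle x y (h (u x)), dist_triangle y (h x) (h (u x))]
  have hle : dist x (h (u x)) ≤ dist x (h x) := hmax hmem
  linarith

-- A point `x` is determined by the set of functions `φ` along which the distance from `x` to an
-- extremal translate of `x` is attained: if these sets agree at `x` and `y ≠ x`, then `y` lies on a
-- `φ`-geodesic from `x` to `h x` and the extremality of the translation found at `y` fails.
lemma finite_of_isMinimalMap [CompactSpace Ω] (hΩ : HasPolyhedralDist Ω) (hF : Isometry F)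
    (hmin : IsMinimalMap F) : Finite Ω := by
  obtain ⟨Φ, hfin, hΦ⟩ := hΩ
  have hle : ∀ φ ∈ Φ, ∀ x y, φ y - φ x ≤ dist x y := fun φ hφ x y =>
    (hΦ x y).2 (Set.mem_image_of_mem _ hφ)
  let attained : Ω → Set Φ := fun x =>
    {φ | ∃ h, IsExtremalTranslation F h ∧ φ.1 (h x) - φ.1 x = dist x (h x)}
  have := hfin.to_subtype
  refine Finite.of_injective attained fun x y hxy => ?_
  by_contra hne
  obtain ⟨h, hh, hgeod⟩ := exists_isExtremalTranslation hF hmin x y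
  obtain ⟨φ, hφ, hφh : φ (h x) - φ x = dist x (h x)⟩ := (hΦ x (h x)).1
  have hφxy : dist x y ≤ φ y - φ x := by linarith [hle φ hφ y (h x)]
  have hφx : ⟨φ, hφ⟩ ∈ attained x := ⟨h, hh, hφh⟩
  rw [hxy] at hφx
  obtain ⟨k, hk, hφk : φ (k y) - φ y = dist y (k y)⟩ := hφx
  obtain ⟨u, hu, rfl⟩ := exists_isTranslation_apply_eq hF hmin x y
  have hlt := hk.2 u hu x (dist_pos.2 hne)
  rw [hk.1.dist_eq hF hmin x (u x)] at hlt
  linarith [hle φ hφ x (k (u x))]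

end Translations

section Periodicity

/-- The orbit of `x` under `f` eventually follows a periodic orbit up to an arbitrary error. -/
def IsAsymptoticallyPeriodic {X : Type*} [PseudoMetricSpace X] (f : X → X) (x : X) : Prop :=
  ∀ ε > 0, ∃ p > 0, ∃ n₀, ∀ n ≥ n₀, ∀ k, dist (f^[n + k * p] x) (f^[n] x) ≤ ε

variable {X : Type*} [MetricSpace X] [CompactSpace X] {f : X → X}

lemma exists_periodic_mem_orbitLimitSet (hX : HasPolyhedralDist X) (hf : LipschitzWith 1 f)
    (x : X) : ∃ y ∈ orbitLimitSet f x, y ∈ Function.periodicPts f := by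
  obtain ⟨y, hy⟩ : (orbitLimitSet f x).Nonempty := nonempty_omegaLimit _ _ _ ⟨x, rfl⟩
  have : CompactSpace (orbitLimitSet f x) :=
    isCompact_iff_compactSpace.1 (isClosed_omegaLimit _ _ _).isCompact
  have hmin := isMinimalMap_restrict_orbitLimitSet hf x
  have hiso := isometry_of_isMinimalMap (hf.lipschitzOnWith.mapsToRestrict _) hmin
  have := finite_of_isMinimalMap (hX.subtype _) hiso hmin
  obtain ⟨p, hp, hper⟩ := hiso.injective.mem_periodicPts ⟨y, hy⟩
  exact ⟨y, hy, p, hp, hper.map (g := Subtype.val) (fb := f) fun _ => rfl⟩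

lemma isAsymptoticallyPeriodic_of_lipschitzWith_one (hX : HasPolyhedralDist X)
    (hf : LipschitzWith 1 f) (x : X) : IsAsymptoticallyPeriodic f x := by
  intro ε hε
  obtain ⟨y, hy, p, hp, hper⟩ := exists_periodic_mem_orbitLimitSet hX hf x
  obtain ⟨n₀, -, hn₀⟩ := mem_orbitLimitSet.1 hy (ε / 2) (half_pos hε) 0
  have hnear : ∀ m, dist (f^[n₀ + m] x) (f^[m] y) ≤ ε / 2 := fun m => by
    rw [add_comm, Function.iterate_add_apply]
    exact (dist_iterate_le hf m _ _).trans hn₀.le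
  refine ⟨p, hp, n₀, fun n hn k => ?_⟩
  obtain ⟨m, rfl⟩ := Nat.exists_eq_add_of_le hn
  have hshift : f^[m + k * p] y = f^[m] y := by
    rw [Function.iterate_add_apply, (hper.const_mul k).eq]
  have hnear' := hnear (m + k * p)
  rw [hshift, ← add_assoc] at hnear'
  linarith [dist_triangle_right (f^[n₀ + m + k * p] x) (f^[n₀ + m] x) (f^[m] y), hnear m]

end Periodicity

/-! ### Finite approximation of commutative dynamics -/

section CommutativeFolds

variable {X A : Type*} {f : X → A → X} [RightCommutative f]

lemma foldl_nsmul_singleton (n : ℕ) (x : X) (a : A) :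
    (n • {a} : Multiset A).foldl f x = (f · a)^[n] x := by
  induction n generalizing x with
  | zero => rw [zero_nsmul, Multiset.foldl_zero, Function.iterate_zero_apply]
  | succ n ih =>
    rw [succ_nsmul', Multiset.singleton_add, Multiset.foldl_cons, ih, Function.iterate_succ_apply]

lemma foldl_eq_foldl_sum_count [Fintype A] [DecidableEq A] (x : X) (l : List A) :
    l.foldl f x = (∑ a, l.count a • {a} : Multiset A).foldl f x := by
  rw [← Multiset.coe_foldl]
  congr 1
  ext a
  simp [Multiset.count_sum', Multiset.count_singleton]

end CommutativeFolds

lemma foldl_update_apply {ι : Type*} {S : ι → Type*} [DecidableEq ι] (next : ∀ a, S a → S a)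
    (l : List ι) (k : ∀ a, S a) (a : ι) :
    l.foldl (fun k b => Function.update k b (next b (k b))) k a =
      (next a)^[l.count a] (k a) := by
  induction l generalizing k with
  | nil => rfl
  | cons b l ih =>
    rw [List.foldl_cons, ih]
    rcases eq_or_ne b a with rfl | hba
    · rw [List.count_cons_self, Function.update_self, Function.iterate_succ_apply]
    · rw [List.count_cons_of_ne hba, Function.update_of_ne hba.symm]

section CommutativeDynamics

variable {X A : Type*} [PseudoMetricSpace X] {f : X → A → X} {x : X} {δ : ℝ}

lemma IsAsymptoticallyPeriodic.exists_finite_counter {f : X → X}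
    (hf : IsAsymptoticallyPeriodic f x) (hδ : 0 < δ) :
    ∃ (m : ℕ) (next : Fin m → Fin m) (k₀ : Fin m),
      ∀ n, dist (f^[n] x) (f^[(next^[n] k₀ : Fin m)] x) ≤ δ := by
  obtain ⟨p, hp, n₀, hper⟩ := hf δ hδ
  let next : Fin (n₀ + p) → Fin (n₀ + p) := fun k =>
    if hk : k + 1 < n₀ + p then ⟨k + 1, hk⟩ else ⟨n₀, Nat.lt_add_of_pos_right hp⟩
  refine ⟨n₀ + p, next, ⟨0, by omega⟩, fun n => ?_⟩
  obtain ⟨c, hn, hc⟩ : ∃ c, n = (next^[n] ⟨0, by omega⟩ : Fin _) + c * p ∧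
      (c = 0 ∨ n₀ ≤ (next^[n] ⟨0, by omega⟩ : Fin _)) := by
    induction n with
    | zero => exact ⟨0, by simp, Or.inl rfl⟩
    | succ n ih =>
      obtain ⟨c, hn, hc⟩ := ih
      rw [Function.iterate_succ_apply']
      generalize next^[n] _ = k at hn hc
      by_cases hk : k + 1 < n₀ + p
      · exact ⟨c, by simp only [next, dif_pos hk]; omega,
          hc.imp_right fun h => by simp only [next, dif_pos hk]; omega⟩
      · refine ⟨c + 1, ?_, Or.inr ?_⟩
        · simp only [next, dif_neg hk, add_mul]
          omega
        · simp only [next, dif_neg hk, le_refl]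
  rcases hc with rfl | hc
  · rw [zero_mul, add_zero] at hn
    rw [← hn, dist_self]
    exact hδ.le
  · nth_rw 1 [hn]
    exact hper _ hc c

variable [RightCommutative f]

lemma dist_foldl_le (hf : ∀ a, LipschitzWith 1 (f · a)) (s : Multiset A) (x y : X) :
    dist (s.foldl f x) (s.foldl f y) ≤ dist x y := by
  induction s using Multiset.induction generalizing x y with
  | empty => simp only [Multiset.foldl_zero, le_refl]
  | cons a s ih =>
    simp only [Multiset.foldl_cons]
    exact (ih _ _).trans (dist_iterate_le (hf a) 1 x y)

lemma dist_foldl_add_le (hf : ∀ a, LipschitzWith 1 (f · a)) (x : X) (s s' t t' : Multiset A) :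
    dist ((s + t).foldl f x) ((s' + t').foldl f x) ≤
      dist (s.foldl f x) (s'.foldl f x) + dist (t.foldl f x) (t'.foldl f x) := by
  refine (dist_triangle _ ((s' + t).foldl f x) _).trans (add_le_add ?_ ?_)
  · rw [Multiset.foldl_add, Multiset.foldl_add]
    exact dist_foldl_le hf t _ _
  · rw [add_comm s' t, add_comm s' t', Multiset.foldl_add, Multiset.foldl_add]
    exact dist_foldl_le hf s' _ _

lemma dist_foldl_sum_le {ι : Type*} (hf : ∀ a, LipschitzWith 1 (f · a)) (x : X) (t : Finset ι)
    (s s' : ι → Multiset A) :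
    dist ((∑ a ∈ t, s a).foldl f x) ((∑ a ∈ t, s' a).foldl f x) ≤
      ∑ a ∈ t, dist ((s a).foldl f x) ((s' a).foldl f x) := by
  classical
  induction t using Finset.induction_on with
  | empty => simp only [Finset.sum_empty, dist_self, le_refl]
  | insert a t ha ih =>
    rw [Finset.sum_insert ha, Finset.sum_insert ha, Finset.sum_insert ha]
    exact (dist_foldl_add_le hf x _ _ _ _).trans (add_le_add_right ih _)

theorem exists_finite_approximation [Finite A] (hf : ∀ a, LipschitzWith 1 (f · a))
    (hper : ∀ a, IsAsymptoticallyPeriodic (f · a) x) (hδ : 0 < δ) :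
    ∃ (S : A → Type) (_ : ∀ a, Finite (S a)) (f' : (∀ a, S a) → A → ∀ a, S a) (k₀ : ∀ a, S a)
      (rep : (∀ a, S a) → X), ∀ l : List A, dist (l.foldl f x) (rep (l.foldl f' k₀)) < δ := by
  classical
  have := Fintype.ofFinite A
  obtain ⟨η, hη, hcard⟩ := exists_pos_mul_lt hδ (Fintype.card A)
  choose m next k₀ hclose using fun a => (hper a).exists_finite_counter hη
  refine ⟨fun a => Fin (m a), fun a => inferInstance,
    fun k a => Function.update k a (next a (k a)), k₀,
    fun k => (∑ a, (k a : ℕ) • {a} : Multiset A).foldl f x, fun l => hcard.trans_le' ?_⟩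
  simp only [foldl_update_apply, foldl_eq_foldl_sum_count x l]
  refine (dist_foldl_sum_le hf x _ _ _).trans ?_
  rw [← nsmul_eq_mul]
  refine Finset.sum_le_card_nsmul _ _ _ fun a _ => ?_
  rw [foldl_nsmul_singleton, foldl_nsmul_singleton]
  exact hclose a _

end CommutativeDynamics

section PayoffApproximation

variable {X K I J : Type*} [Fintype I] [Fintype J] {q : X → I → J → X} {g : X → I → J → ℝ}
  {q' : K → I → J → K} {g' : K → I → J → ℝ} {x : X} {k : K} {ε c : ℝ}

/-- The state reached from `x` after the players have chosen the action pairs in `l`. -/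
def stateAfter (q : X → I → J → X) (x : X) (l : List (I × J)) : X :=
  l.foldl (fun x a => q x a.1 a.2) x

lemma expPay_le_expPay_add
    (hg : ∀ l i j, g (stateAfter q x l) i j ≤ g' (stateAfter q' k l) i j + ε)
    (σ : List (I × J) → PMF I) (τ : List (I × J) → PMF J) (n : ℕ) (h : List (I × J)) :
    expPay q g σ τ n x h ≤ expPay q' g' σ τ n k h + n * ε := by
  induction n generalizing x k h with
  | zero => simp only [expPay, Nat.cast_zero, zero_mul, add_zero, le_refl]
  | succ n ih =>
    have htotal : ∑ i, ∑ j, (σ h i).toReal * (τ h j).toReal * (((n : ℝ) + 1) * ε) =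
        (n + 1) * ε := by
      simp only [← Finset.sum_mul, ← Finset.mul_sum, (toReal_mem_stdSimplex _).2, one_mul]
    rw [expPay, expPay, Nat.cast_succ, ← htotal]
    simp only [← Finset.sum_add_distrib, ← mul_add]
    refine Finset.sum_le_sum fun i _ => Finset.sum_le_sum fun j _ =>
      mul_le_mul_of_nonneg_left ?_ (by positivity)
    have hnow : g x i j ≤ g' k i j + ε := hg [] i j
    have hlater := ih (x := q x i j) (k := q' k i j) (fun l => hg ((i, j) :: l)) (h ++ [(i, j)])
    linarith

lemma gamePayoff_le_gamePayoff_add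
    (hg : ∀ l i j, g (stateAfter q x l) i j ≤ g' (stateAfter q' k l) i j + ε)
    (σ : List (I × J) → PMF I) (τ : List (I × J) → PMF J) {n : ℕ} (hn : n ≠ 0) :
    gamePayoff q g σ τ x n ≤ gamePayoff q' g' σ τ k n + ε := by
  calc gamePayoff q g σ τ x n
      ≤ 1 / n * (expPay q' g' σ τ n k [] + n * ε) := by
        rw [gamePayoff]
        gcongr
        exact expPay_le_expPay_add hg σ τ n []
    _ = gamePayoff q' g' σ τ k n + ε := by
        rw [gamePayoff]
        field_simp

lemma Secures1.of_approximation (h : Secures1 q' g' k c)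
    (hg : ∀ l i j, g' (stateAfter q' k l) i j ≤ g (stateAfter q x l) i j + ε) :
    Secures1 q g x (c - ε) := by
  obtain ⟨σ, N, hσ⟩ := h
  refine ⟨σ, N + 1, fun τ n hn => ?_⟩
  linarith [hσ τ n (Nat.le_of_succ_le hn), gamePayoff_le_gamePayoff_add hg σ τ (n := n) (by omega)]

lemma Secures2.of_approximation (h : Secures2 q' g' k c)
    (hg : ∀ l i j, g (stateAfter q x l) i j ≤ g' (stateAfter q' k l) i j + ε) :
    Secures2 q g x (c + ε) := by
  obtain ⟨τ, N, hτ⟩ := h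
  refine ⟨τ, N + 1, fun σ n hn => ?_⟩
  linarith [hτ σ n (Nat.le_of_succ_le hn), gamePayoff_le_gamePayoff_add hg σ τ (n := n) (by omega)]

end PayoffApproximation

/-! ### Existence of the uniform value -/

section UniformValue

variable {X I J : Type*} [Fintype I] [Nonempty I] [Fintype J] [Nonempty J]
  {q : X → I → J → X} {g : X → I → J → ℝ}

theorem exists_secures_of_isAsymptoticallyPeriodic [PseudoMetricSpace X]
    (hLip : ∀ i j, LipschitzWith 1 (fun x => q x i j))
    (hcomm : ∀ (x : X) (i i' : I) (j j' : J), q (q x i j) i' j' = q (q x i' j') i j)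
    (hg01 : ∀ x i j, g x i j ∈ Set.Icc (0 : ℝ) 1)
    (hgc : ∀ i j, UniformContinuous fun x => g x i j) {x : X}
    (hper : ∀ i j, IsAsymptoticallyPeriodic (fun x => q x i j) x) {ε : ℝ} (hε : 0 < ε) :
    ∃ w, Secures1 q g x (w - ε) ∧ Secures2 q g x (w + ε) := by
  obtain ⟨δ, hδ, hclose⟩ := Metric.uniformEquicontinuous_iff.1
    (uniformEquicontinuous_finite.2 fun a : I × J => hgc a.1 a.2) (ε / 2) (half_pos hε)
  have hgδ (x y : X) (hxy : dist x y < δ) (i : I) (j : J) : g x i j ≤ g y i j + ε / 2 := by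
    have hij : |g x i j - g y i j| < ε / 2 := hclose x y hxy (i, j)
    linarith [le_abs_self (g x i j - g y i j)]
  have : RightCommutative fun x (a : I × J) => q x a.1 a.2 :=
    ⟨fun x a b => hcomm x a.1 b.1 a.2 b.2⟩
  obtain ⟨S, _, q', k, rep, hrep⟩ := exists_finite_approximation (fun a : I × J => hLip a.1 a.2)
    (fun a => hper a.1 a.2) hδ
  obtain ⟨w, hw₁, hw₂⟩ := exists_secures_of_finite (q := fun k i j => q' k (i, j))
    (fun k => hg01 (rep k)) k (half_pos hε)
  exact ⟨w, (hw₁.of_approximation fun l =>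
      hgδ _ _ ((dist_comm _ _).trans_lt (hrep l))).mono (by linarith),
    (hw₂.of_approximation fun l => hgδ _ _ (hrep l)).mono (by linarith)⟩

theorem commutative_stochastic_game_has_uniform_value_general [MetricSpace X] [CompactSpace X]
    (hX : HasPolyhedralDist X)
    (hLip : ∀ i j, LipschitzWith 1 (fun x => q x i j))
    (hcomm : ∀ (x : X) (i i' : I) (j j' : J), q (q x i j) i' j' = q (q x i' j') i j)
    (hg01 : ∀ x i j, g x i j ∈ Set.Icc (0 : ℝ) 1)
    (hgc : ∀ i j, Continuous fun x => g x i j) (x : X) :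
    ∃ v : ℝ, Guarantees1 q g x v ∧ Guarantees2 q g x v :=
  exists_guarantees_of_forall_secures fun _ hε =>
    exists_secures_of_isAsymptoticallyPeriodic hLip hcomm hg01
      (fun i j => CompactSpace.uniformContinuous_of_continuous (hgc i j))
      (fun i j => isAsymptoticallyPeriodic_of_lipschitzWith_one hX (hLip i j) x) hε

end UniformValue

/-- A deterministic commutative stochastic game on a compact subset of `ℝ^m` with the `ℓ¹` norm,
with finite action sets, a `1`-Lipschitz transition and a continuous payoff, has a uniform
value from every initial state. -/
theorem commutative_stochastic_game_has_uniform_value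
    {m : ℕ} {I J : Type*} [Fintype I] [Nonempty I] [Fintype J] [Nonempty J]
    (X : Set (PiLp 1 fun _ : Fin m => ℝ)) (hXne : X.Nonempty) (hXc : IsCompact X)
    (q : X → I → J → X)
    (hLip : ∀ i j, LipschitzWith 1 (fun x => q x i j))
    (hcomm : ∀ (x : X) (i i' : I) (j j' : J), q (q x i j) i' j' = q (q x i' j') i j)
    (g : X → I → J → ℝ)
    (hg01 : ∀ x i j, g x i j ∈ Set.Icc (0 : ℝ) 1)
    (hgc : ∀ i j, Continuous fun x => g x i j)
    (x₁ : X) :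
    ∃ v : ℝ, Guarantees1 q g x₁ v ∧ Guarantees2 q g x₁ v := by
  have : CompactSpace X := isCompact_iff_compactSpace.1 hXc
  exact commutative_stochastic_game_has_uniform_value_general
    ((hasPolyhedralDist_piLp_one _).subtype X) hLip hcomm hg01 hgc x₁
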